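/- Let p and q be primes satisfying conditions (2), and let m be the natural number such that 2^m is the order of the 2-Sylow subgroup of the ideal class group of Q(√(-2q)). Then the 2-class group of the triquadratic field K_pq = Q(√q, √(2p), √(-2)) is cyclic of order 2^(m+1), i.e. isomorphic to Z/2^(m+1)Z. -/

import Mathlib

noncomputable section

open IntermediateField NumberField

/-- Conditions (2). -/
def Cond2 (p q : ℕ) : Prop :=
  p.Prime ∧ q.Prime ∧ p % 4 = 3 ∧ q % 4 = 3 ∧
    jacobiSym 2 p = -1 ∧ jacobiSym 2 q = 1 ∧ jacobiSym (p : ℤ) q = -1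

/-- The imaginary quadratic field `ℚ(√(-2q))` as a subfield of `ℂ`,
where `√(-2q) = i√(2q)`. -/
def k0 (q : ℕ) : IntermediateField ℚ ℂ :=
  adjoin ℚ {Complex.I * ((Real.sqrt (2 * q) : ℝ) : ℂ)}

/-- The triquadratic field `K_pq = ℚ(√q, √(2p), √(-2))` as a subfield of `ℂ`,
where `√(-2) = i√2`. -/
def Kf (p q : ℕ) : IntermediateField ℚ ℂ :=
  adjoin ℚ {((Real.sqrt q : ℝ) : ℂ), ((Real.sqrt (2 * p) : ℝ) : ℂ),
    Complex.I * ((Real.sqrt 2 : ℝ) : ℂ)}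

/-!
Write `L = ℚ(√-2, √q)` and `K = L(√-p)`. Genus theory, in the form of a bound for the square
classes `x` of `K` whose principal ideal is a square, shows that the `2`-torsion of `Cl(K)` has
order at most `2`, so the `2`-class group is cyclic. A prime `I` of `L` of norm `p` becomes a
square `P ^ 2` in `K`, and quadratic residue symbols at `q` show that the class of `P` is not a
square; hence it generates the `2`-class group up to odd order.

It remains to find the `2`-part of the order of `[P]`. In `k = ℚ(√(-2q))`, for a suitable odd `H`,
the ideal `N(I) ^ (2 ^ (m - 1) * H)` times the prime `(2, √(-2q))` is principal, and this last
prime becomes principal in `L`. Since the other two quadratic subfields of `L` have odd class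
number, `I ^ (2 ^ m * H)` is principal, so `[P] ^ (2 ^ (m + 1) * H) = 1`. If `[P] ^ (2 ^ m * H)`
were trivial, a generator of `I ^ (2 ^ m * H)` would be a norm `a ^ 2 + p * c ^ 2` from `K`, which
is impossible in `ℚ_p` because `2` is not a square modulo `p`.
-/

namespace Triquad

open IsDedekindDomain nonZeroDivisors

section Powers

variable {A D : Type*} [CommGroup A] [CommGroup D]

/-- The subgroup of `n`-th powers of a commutative group. -/
abbrev nthPowers (n : ℕ) (G : Type*) [CommGroup G] : Subgroup G :=
  (powMonoidHom n : G →* G).range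

/-- The `n`-torsion subgroup of a commutative group. -/
abbrev nthTorsion (n : ℕ) (G : Type*) [CommGroup G] : Subgroup G :=
  (powMonoidHom n : G →* G).ker

theorem mem_nthPowers {n : ℕ} {x : A} : x ∈ nthPowers n A ↔ ∃ y, y ^ n = x := Iff.rfl

theorem pow_mem_nthPowers (n : ℕ) (x : A) : x ^ n ∈ nthPowers n A := ⟨x, rfl⟩

theorem mem_nthTorsion {n : ℕ} {x : A} : x ∈ nthTorsion n A ↔ x ^ n = 1 := Iff.rfl

theorem nthPowers_le_comap (n : ℕ) (f : A →* D) : nthPowers n A ≤ (nthPowers n D).comap f := by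
  rintro _ ⟨y, rfl⟩
  exact ⟨f y, (map_pow f y n).symm⟩

theorem map_nthPowers (n : ℕ) (f : A →* D) :
    (nthPowers n A).map f = f.range.map (powMonoidHom n) := by
  rw [MonoidHom.map_range, MonoidHom.map_range]
  congr 1
  ext x
  exact map_pow f x n

theorem nthPowers_subgroupOf {n : ℕ} {H : Subgroup A} (hH : ∀ x : A, x ^ n ∈ H → x ∈ H) :
    (nthPowers n A).subgroupOf H = nthPowers n H := by
  ext ⟨x, hx⟩
  constructor
  · rintro ⟨y, rfl⟩
    exact ⟨⟨y, hH y hx⟩, rfl⟩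
  · rintro ⟨y, hy⟩
    exact ⟨y, congrArg Subtype.val hy⟩

theorem index_nthPowers_congr (n : ℕ) (e : A ≃* D) :
    (nthPowers n A).index = (nthPowers n D).index := by
  rw [← Subgroup.index_map_equiv _ e]
  congr 1
  exact (map_nthPowers n e.toMonoidHom).trans (by
    rw [MonoidHom.range_eq_top.mpr e.surjective, ← MonoidHom.range_eq_map])

theorem card_nthTorsion_congr (n : ℕ) (e : A ≃* D) :
    Nat.card (nthTorsion n A) = Nat.card (nthTorsion n D) :=
  Nat.card_congr <| e.toEquiv.subtypeEquiv fun a => by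
    change a ^ n = 1 ↔ e a ^ n = 1
    rw [← map_pow, map_eq_one_iff e e.injective]

theorem index_nthPowers_quotient (n : ℕ) (H : Subgroup A) :
    (nthPowers n (A ⧸ H)).index = (nthPowers n A ⊔ H).index := by
  have hmap : nthPowers n (A ⧸ H) = (nthPowers n A).map (QuotientGroup.mk' H) := by
    rw [map_nthPowers, QuotientGroup.range_mk', ← MonoidHom.range_eq_map]
  rw [hmap, Subgroup.index_map, QuotientGroup.ker_mk', QuotientGroup.range_mk',
    Subgroup.index_top, mul_one]

theorem index_nthPowers_eq_mul {n : ℕ} {H : Subgroup A} (hH : ∀ x : A, x ^ n ∈ H → x ∈ H) :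
    (nthPowers n A).index = (nthPowers n H).index * (nthPowers n (A ⧸ H)).index := by
  rw [index_nthPowers_quotient, ← nthPowers_subgroupOf hH, ← Subgroup.relIndex,
    ← Subgroup.relIndex_sup_left, Subgroup.relIndex_mul_index le_sup_left]

theorem card_nthTorsion_quotient {n : ℕ} (hn : n ≠ 0) [IsMulTorsionFree D] (H : Subgroup D) :
    Nat.card (nthTorsion n (D ⧸ H)) = (H.map (powMonoidHom n)).relIndex (H ⊓ nthPowers n D) := by
  set P : Subgroup D := H.comap (powMonoidHom n)
  have htors : nthTorsion n (D ⧸ H) = P.map (QuotientGroup.mk' H) := by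
    ext x
    obtain ⟨x, rfl⟩ := QuotientGroup.mk'_surjective H x
    rw [mem_nthTorsion, ← map_pow, ← MonoidHom.mem_ker, QuotientGroup.ker_mk']
    refine ⟨fun hx => ⟨x, hx, rfl⟩, ?_⟩
    rintro ⟨y, hy, hyx⟩
    obtain ⟨z, hz, rfl⟩ := (QuotientGroup.mk'_eq_mk' H).mp hyx
    rw [mul_pow]
    exact mul_mem hy (pow_mem hz n)
  rw [htors, ← Subgroup.relIndex_ker, QuotientGroup.ker_mk', inf_comm,
    ← Subgroup.map_comap_eq,
    Subgroup.relIndex_map_map_of_injective _ _ (pow_left_injective hn)]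

/-- The snake lemma for the `n`-th power maps on `ker f → A → f.range`. -/
theorem relIndex_comap_nthPowers {n : ℕ} (hn : n ≠ 0) [IsMulTorsionFree D] (f : A →* D) :
    (nthPowers n A).relIndex ((nthPowers n D).comap f) =
      (nthPowers n f.ker).index * Nat.card (nthTorsion n (D ⧸ f.range)) := by
  have hsat (x : A) (hx : x ^ n ∈ f.ker) : x ∈ f.ker := by
    rw [MonoidHom.mem_ker, map_pow] at hx
    exact (pow_eq_one_iff_left hn).mp hx
  have hker : f.ker ≤ (nthPowers n D).comap f := fun x hx => ⟨1, by simp [MonoidHom.mem_ker.mp hx]⟩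
  have hcard : (nthPowers n A ⊔ f.ker).relIndex ((nthPowers n D).comap f) =
      Nat.card (nthTorsion n (D ⧸ f.range)) := by
    rw [← Subgroup.comap_map_eq, Subgroup.relIndex_comap, Subgroup.map_comap_eq,
      card_nthTorsion_quotient hn, map_nthPowers]
  rw [← Subgroup.relIndex_mul_relIndex _ _ _ le_sup_left (sup_le (nthPowers_le_comap n f) hker),
    hcard, Subgroup.relIndex_sup_left, Subgroup.relIndex, nthPowers_subgroupOf hsat]

end Powers

section Ideals

variable {R K : Type*} [CommRing R] [Field K] [Algebra R K] [IsFractionRing R K]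

theorem ker_toPrincipalIdeal :
    (toPrincipalIdeal R K).ker = (Units.map (algebraMap R K : R →* K)).range := by
  have exists_algebraMap_eq (y : Kˣ) (hy : toPrincipalIdeal R K y = 1) :
      ∃ a : R, algebraMap R K a = y := by
    rw [toPrincipalIdeal_eq_iff, Units.val_one] at hy
    exact (FractionalIdeal.mem_one_iff _).mp (hy ▸ FractionalIdeal.mem_spanSingleton_self _ _)
  ext x
  constructor
  · intro hx
    obtain ⟨a, ha⟩ := exists_algebraMap_eq x hx
    obtain ⟨b, hb⟩ := exists_algebraMap_eq x⁻¹ (by rw [map_inv, hx, inv_one])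
    have hab : a * b = 1 := IsFractionRing.injective R K (by
      rw [map_mul, ha, hb, Units.mul_inv, map_one])
    exact ⟨⟨a, b, hab, by rw [mul_comm, hab]⟩, Units.ext ha⟩
  · rintro ⟨u, rfl⟩
    rw [MonoidHom.mem_ker, toPrincipalIdeal_eq_iff, Units.val_one, Units.coe_map,
      MonoidHom.coe_coe, ← FractionalIdeal.coeIdeal_span_singleton,
      Ideal.span_singleton_eq_top.mpr u.isUnit, FractionalIdeal.coeIdeal_top]

instance [IsDedekindDomain R] : IsMulTorsionFree (FractionalIdeal R⁰ K)ˣ where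
  pow_left_injective n hn I J hIJ := by
    have hcount (v : HeightOneSpectrum R) :
        FractionalIdeal.count K v I.1 = FractionalIdeal.count K v J.1 := by
      have h := congrArg (FractionalIdeal.count K v) (congrArg Units.val hIJ)
      simp only [Units.val_pow_eq_pow_val, FractionalIdeal.count_pow] at h
      exact mul_left_cancel₀ (by exact_mod_cast hn) h
    ext1
    rw [← FractionalIdeal.finprod_heightOneSpectrum_factorization' K I.ne_zero,
      ← FractionalIdeal.finprod_heightOneSpectrum_factorization' K J.ne_zero]
    exact finprod_congr fun v => by rw [hcount]

theorem exists_pow_eq_of_dvd_multiplicity [IsDedekindDomain R] {n : ℕ} {I : Ideal R} (hI : I ≠ ⊥)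
    (h : ∀ v : HeightOneSpectrum R, n ∣ multiplicity v.asIdeal I) : ∃ J, J ^ n = I := by
  classical
  have hcount : ∀ P ∈ UniqueFactorizationMonoid.normalizedFactors I,
      n ∣ Multiset.count P (UniqueFactorizationMonoid.normalizedFactors I) := fun P hP => by
    have hprime := UniqueFactorizationMonoid.prime_of_normalized_factor P hP
    let v : HeightOneSpectrum R := ⟨P, Ideal.isPrime_of_prime hprime, hprime.ne_zero⟩
    exact HeightOneSpectrum.count_normalizedFactors_eq_multiplicity hI v ▸ h v
  obtain ⟨s, hs⟩ := Multiset.exists_smul_of_dvd_count _ hcount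
  exact ⟨s.prod, by rw [← Multiset.prod_nsmul, ← hs, Ideal.prod_normalizedFactors_eq_self hI]⟩

theorem count_coe_eq_multiplicity [IsDedekindDomain R] (v : HeightOneSpectrum R) {I : Ideal R}
    (hI : I ≠ ⊥) : FractionalIdeal.count K v I = multiplicity v.asIdeal I := by
  classical
  rw [FractionalIdeal.count_coe K v hI, Ideal.count_associates_factors_eq hI v.isPrime v.ne_bot,
    HeightOneSpectrum.count_normalizedFactors_eq_multiplicity hI]

theorem valuationOfNeZero_algebraMap [IsDedekindDomain R] (v : HeightOneSpectrum R) {a : R}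
    (ha : algebraMap R K a ≠ 0) :
    v.valuationOfNeZero (Units.mk0 _ ha) =
      Multiplicative.ofAdd (-multiplicity v.asIdeal (Ideal.span {a}) : ℤ) := by
  have ha0 : a ≠ 0 := ne_zero_of_map ha
  rw [← WithZero.coe_inj, HeightOneSpectrum.valuationOfNeZero_eq, Units.val_mk0,
    v.valuation_of_algebraMap, v.intValuation_eq_exp_neg_multiplicity ha0]
  rfl

end Ideals

theorem ofAdd_mem_nthPowers {n : ℕ} {k : ℤ} :
    Multiplicative.ofAdd k ∈ nthPowers n (Multiplicative ℤ) ↔ (n : ℤ) ∣ k := by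
  constructor
  · rintro ⟨y, hy⟩
    exact ⟨y.toAdd, by rw [← toAdd_ofAdd k, ← hy]; simp⟩
  · rintro ⟨l, rfl⟩
    exact ⟨Multiplicative.ofAdd l, by rw [powMonoidHom_apply, ← ofAdd_nsmul, nsmul_eq_mul]⟩

/-- The `n`-virtual units of a number field `K`: the elements of `Kˣ` generating the `n`-th power of
a fractional ideal. -/
def virtualUnits (n : ℕ) (K : Type*) [Field K] [NumberField K] : Subgroup Kˣ :=
  (nthPowers n (FractionalIdeal (𝓞 K)⁰ K)ˣ).comap (toPrincipalIdeal (𝓞 K) K)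

/-- The order of the `n`-Selmer group of a number field `K`, the group of `n`-virtual units modulo
`n`-th powers of elements. -/
def selmerCard (n : ℕ) (K : Type*) [Field K] [NumberField K] : ℕ :=
  (nthPowers n Kˣ).relIndex (virtualUnits n K)

theorem exists_eq_mk0_mul_pow {R K : Type*} [CommRing R] [IsDomain R] [Field K] [Algebra R K]
    [IsFractionRing R K] {n : ℕ} (hn : n ≠ 0) (x : Kˣ) :
    ∃ (a : R) (ha : algebraMap R K a ≠ 0) (z : Kˣ), x = Units.mk0 _ ha * z ^ n := by
  obtain ⟨a, b, hb, hx⟩ := IsFractionRing.div_surjective (A := R) (x : K)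
  have hb0 : algebraMap R K b ≠ 0 := by simpa using nonZeroDivisors.ne_zero hb
  have ha0 : algebraMap R K a ≠ 0 := fun h => x.ne_zero (by rw [← hx, h, zero_div])
  refine ⟨a * b ^ (n - 1), ?_, (Units.mk0 _ hb0)⁻¹, Units.ext ?_⟩
  · rw [map_mul, map_pow]
    exact mul_ne_zero ha0 (pow_ne_zero _ hb0)
  · rw [← hx, Units.val_mul, Units.val_mk0, inv_pow, Units.val_inv_eq_inv_val,
      Units.val_pow_eq_pow_val, Units.val_mk0, map_mul, map_pow, ← pow_sub_one_mul hn]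
    field_simp

section VirtualUnits

variable {n : ℕ} {K : Type*} [Field K] [NumberField K]

theorem index_nthPowers_units (hn : n ≠ 0) :
    (nthPowers n (𝓞 K)ˣ).index = n ^ Units.rank K * (Units.torsionOrder K).gcd n := by
  have hsat (x : (𝓞 K)ˣ) (hx : x ^ n ∈ Units.torsion K) : x ∈ Units.torsion K :=
    IsOfFinOrder.of_pow hx hn
  have hfree : (nthPowers n ((𝓞 K)ˣ ⧸ Units.torsion K)).index = n ^ Units.rank K := by
    rw [← Units.finrank_modTorsion]
    exact AddSubgroup.index_range_nsmul (Additive ((𝓞 K)ˣ ⧸ Units.torsion K)) n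
  rw [index_nthPowers_eq_mul hsat, hfree, IsCyclic.index_powMonoidHom_range, mul_comm]
  rfl

theorem selmerCard_eq (hn : n ≠ 0) :
    selmerCard n K = n ^ Units.rank K * (Units.torsionOrder K).gcd n *
      Nat.card (nthTorsion n (ClassGroup (𝓞 K))) := by
  have hinj : Function.Injective (Units.map (algebraMap (𝓞 K) K : 𝓞 K →* K)) :=
    Units.map_injective RingOfIntegers.coe_injective
  rw [selmerCard, virtualUnits, relIndex_comap_nthPowers hn, ← index_nthPowers_units hn,
    ← card_nthTorsion_congr n (ClassGroup.equiv (R := 𝓞 K) K), ker_toPrincipalIdeal,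
    index_nthPowers_congr n (MonoidHom.ofInjective hinj)]

theorem selmerCard_ne_zero (hn : n ≠ 0) : selmerCard n K ≠ 0 := by
  rw [selmerCard_eq hn]
  exact mul_ne_zero (mul_ne_zero (pow_ne_zero _ hn) (Nat.gcd_ne_zero_right hn)) Nat.card_pos.ne'

theorem selmerCard_two :
    selmerCard 2 K = 2 ^ (Units.rank K + 1) * Nat.card (nthTorsion 2 (ClassGroup (𝓞 K))) := by
  rw [selmerCard_eq two_ne_zero, Nat.gcd_eq_right (Units.even_torsionOrder K).two_dvd, pow_succ]

theorem nthPowers_le_virtualUnits : nthPowers n Kˣ ≤ virtualUnits n K :=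
  nthPowers_le_comap n _

theorem mk0_mem_virtualUnits (hn : n ≠ 0) {a : 𝓞 K} (ha : algebraMap (𝓞 K) K a ≠ 0)
    {J : Ideal (𝓞 K)} (hJ : J ^ n = Ideal.span {a}) : Units.mk0 _ ha ∈ virtualUnits n K := by
  have hJ0 : (J : FractionalIdeal (𝓞 K)⁰ K) ≠ 0 := fun h => ha (by
    rw [FractionalIdeal.coeIdeal_eq_zero] at h
    rw [h, Ideal.bot_pow hn, eq_comm, Ideal.span_singleton_eq_bot] at hJ
    rw [hJ, map_zero])
  refine ⟨Units.mk0 _ hJ0, (toPrincipalIdeal_eq_iff.mpr ?_).symm⟩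
  rw [powMonoidHom_apply, Units.val_pow_eq_pow_val, Units.val_mk0, Units.val_mk0,
    ← FractionalIdeal.coeIdeal_pow, hJ, FractionalIdeal.coeIdeal_span_singleton]

theorem dvd_multiplicity_of_mk0_mem_virtualUnits {a : 𝓞 K} (ha : algebraMap (𝓞 K) K a ≠ 0)
    (h : Units.mk0 _ ha ∈ virtualUnits n K) (v : HeightOneSpectrum (𝓞 K)) :
    n ∣ multiplicity v.asIdeal (Ideal.span {a}) := by
  obtain ⟨D, hD⟩ := h
  have ha0 : Ideal.span {a} ≠ ⊥ := Ideal.span_singleton_eq_bot.not.mpr (ne_zero_of_map ha)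
  have hD' : (D : FractionalIdeal (𝓞 K)⁰ K) ^ n = (Ideal.span {a} : Ideal (𝓞 K)) := by
    rw [FractionalIdeal.coeIdeal_span_singleton, ← Units.val_pow_eq_pow_val]
    exact (toPrincipalIdeal_eq_iff.mp hD.symm).symm
  have hcount := FractionalIdeal.count_pow K v n D
  rw [hD', count_coe_eq_multiplicity v ha0] at hcount
  exact Int.natCast_dvd_natCast.mp ⟨_, hcount⟩

theorem mk0_mem_virtualUnits_iff (hn : n ≠ 0) {a : 𝓞 K} (ha : algebraMap (𝓞 K) K a ≠ 0) :
    Units.mk0 _ ha ∈ virtualUnits n K ↔ ∃ J : Ideal (𝓞 K), J ^ n = Ideal.span {a} := by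
  have ha0 : Ideal.span {a} ≠ ⊥ := Ideal.span_singleton_eq_bot.not.mpr (ne_zero_of_map ha)
  exact ⟨fun h => exists_pow_eq_of_dvd_multiplicity ha0
    (dvd_multiplicity_of_mk0_mem_virtualUnits ha h), fun ⟨J, hJ⟩ => mk0_mem_virtualUnits hn ha hJ⟩

theorem mem_virtualUnits_iff_forall (hn : n ≠ 0) {x : Kˣ} :
    x ∈ virtualUnits n K ↔ ∀ v : HeightOneSpectrum (𝓞 K),
      v.valuationOfNeZero x ∈ nthPowers n (Multiplicative ℤ) := by
  obtain ⟨a, ha, z, rfl⟩ := exists_eq_mk0_mul_pow (R := 𝓞 K) hn x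
  have ha0 : Ideal.span {a} ≠ ⊥ := Ideal.span_singleton_eq_bot.not.mpr (ne_zero_of_map ha)
  simp only [Subgroup.mul_mem_cancel_right _ (nthPowers_le_virtualUnits (pow_mem_nthPowers n z)),
    map_mul, map_pow, Subgroup.mul_mem_cancel_right _ (pow_mem_nthPowers n _),
    valuationOfNeZero_algebraMap, ofAdd_mem_nthPowers, dvd_neg, Int.natCast_dvd_natCast]
  exact ⟨dvd_multiplicity_of_mk0_mem_virtualUnits ha, fun h =>
    (mk0_mem_virtualUnits_iff hn ha).mpr (exists_pow_eq_of_dvd_multiplicity ha0 h)⟩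

end VirtualUnits

section QuadraticNorm

variable {F K : Type*} [Field F] [Field K] [Algebra F K]

theorem sq_sub_trace_mul_add_norm (h2 : Module.finrank F K = 2) (β : K) :
    β ^ 2 - algebraMap F K (Algebra.trace F K β) * β + algebraMap F K (Algebra.norm F β) = 0 := by
  have : Module.Finite F K := Module.finite_of_finrank_eq_succ h2
  have b := Module.finBasisOfFinrankEq F K h2
  have h := Matrix.aeval_self_charpoly (Algebra.leftMulMatrix b β)
  rw [Matrix.charpoly_fin_two, ← Algebra.norm_eq_matrix_det, ← Algebra.trace_eq_matrix_trace] at h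
  apply Algebra.leftMulMatrix_injective b
  rw [map_zero, ← h]
  simp only [map_add, map_sub, map_mul, map_pow, Polynomial.aeval_X, Polynomial.aeval_C,
    AlgHom.commutes]

/-- If the norm of `β` is `c ^ 2`, then `(β + c) ^ 2 = (trace β + 2 * c) * β`. -/
theorem exists_algebraMap_mul_sq_eq_of_norm_eq_sq (h2 : Module.finrank F K = 2) {β : K}
    (hβ : β ≠ 0) {c : F} (hc : Algebra.norm F β = c ^ 2) :
    ∃ f : F, ∃ y : K, algebraMap F K f * y ^ 2 = β := by
  set t := Algebra.trace F K β + 2 * c with ht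
  have hsq : (β + algebraMap F K c) ^ 2 = algebraMap F K t * β := by
    have h := sq_sub_trace_mul_add_norm h2 β
    rw [hc, map_pow] at h
    simp only [ht, map_add, map_mul, map_ofNat]
    linear_combination h
  rcases eq_or_ne t 0 with h0 | h0
  · refine ⟨-c, 1, ?_⟩
    rw [h0, map_zero, zero_mul, sq_eq_zero_iff] at hsq
    rw [map_neg, one_pow, mul_one, ← eq_neg_of_add_eq_zero_left hsq]
  · have ht0 : algebraMap F K t ≠ 0 := (map_ne_zero _).mpr h0
    exact ⟨t, (β + algebraMap F K c) / algebraMap F K t, by rw [div_pow, hsq]; field_simp⟩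

end QuadraticNorm

section RelIndex

theorem two_le_relIndex {G : Type*} [Group G] {A B : Subgroup G} (h0 : A.relIndex B ≠ 0) {x : G}
    (hxB : x ∈ B) (hxA : x ∉ A) : 2 ≤ A.relIndex B := by
  have h1 : A.relIndex B ≠ 1 := fun h => hxA (Subgroup.relIndex_eq_one.mp h hxB)
  omega

theorem index_nthPowers_multiplicative_int (n : ℕ) :
    (nthPowers n (Multiplicative ℤ)).index = n := by
  have h := AddSubgroup.index_range_nsmul ℤ n
  rw [Module.finrank_self, pow_one] at h
  exact h

end RelIndex

theorem relIndex_comap_norm_inf_le {F K : Type*} [Field F] [Field K] [NumberField K] [Algebra F K]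
    (h2 : Module.finrank F K = 2) :
    (nthPowers 2 Kˣ).relIndex
        ((nthPowers 2 Fˣ).comap (Units.map (Algebra.norm F : K →* F)) ⊓ virtualUnits 2 K) ≤
      ((nthPowers 2 Kˣ).comap (Units.map (algebraMap F K : F →* K))).relIndex
        ((virtualUnits 2 K).comap (Units.map (algebraMap F K : F →* K))) := by
  set i : Fˣ →* Kˣ := Units.map (algebraMap F K : F →* K)
  set M : Subgroup Kˣ := ((virtualUnits 2 K).comap i).map i
  have hle : (nthPowers 2 Fˣ).comap (Units.map (Algebra.norm F : K →* F)) ⊓ virtualUnits 2 K ≤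
      M ⊔ nthPowers 2 Kˣ := by
    rintro β ⟨⟨c, hc⟩, hβ⟩
    obtain ⟨f, y, hfy⟩ := exists_algebraMap_mul_sq_eq_of_norm_eq_sq h2 β.ne_zero
      (c := c) (congrArg Units.val hc).symm
    have hne : algebraMap F K f * y ^ 2 ≠ 0 := hfy ▸ β.ne_zero
    have hf : f ≠ 0 := ne_zero_of_map (left_ne_zero_of_mul hne)
    have hy : y ≠ 0 := fun h => hne (by rw [h, zero_pow two_ne_zero, mul_zero])
    obtain rfl : i (Units.mk0 f hf) * Units.mk0 y hy ^ 2 = β := Units.ext hfy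
    have hsq := pow_mem_nthPowers 2 (Units.mk0 y hy)
    exact Subgroup.mul_mem_sup (Subgroup.mem_map_of_mem i
      ((Subgroup.mul_mem_cancel_right _ (nthPowers_le_virtualUnits hsq)).mp hβ)) hsq
  have hsup : M ⊔ nthPowers 2 Kˣ ≤ virtualUnits 2 K :=
    sup_le (Subgroup.map_comap_le _ _) nthPowers_le_virtualUnits
  have hsel : (nthPowers 2 Kˣ).relIndex (virtualUnits 2 K) ≠ 0 := selmerCard_ne_zero two_ne_zero
  rw [Subgroup.relIndex_comap, ← Subgroup.relIndex_sup_right M (nthPowers 2 Kˣ)]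
  exact Subgroup.relIndex_le_of_le_right hle
    fun h0 => hsel (Subgroup.relIndex_eq_zero_of_le_right hsup h0)

section VirtualUnitsExtension

variable {F K : Type*} [Field F] [Field K] [NumberField F] [NumberField K] [Algebra F K] {n : ℕ}

theorem norm_mem_virtualUnits (hn : n ≠ 0) {x : Kˣ} (hx : x ∈ virtualUnits n K) :
    Units.map (Algebra.norm F : K →* F) x ∈ virtualUnits n F := by
  obtain ⟨a, ha, z, rfl⟩ := exists_eq_mk0_mul_pow (R := 𝓞 K) hn x
  have hz := nthPowers_le_virtualUnits (pow_mem_nthPowers n z)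
  obtain ⟨J, hJ⟩ := (mk0_mem_virtualUnits_iff hn ha).mp ((Subgroup.mul_mem_cancel_right _ hz).mp hx)
  have hnorm : algebraMap (𝓞 F) F (Algebra.intNorm (𝓞 F) (𝓞 K) a) ≠ 0 := by
    rw [Algebra.algebraMap_intNorm (L := K)]
    exact Algebra.norm_ne_zero_iff.mpr ha
  rw [map_mul, map_pow]
  refine mul_mem ?_ (nthPowers_le_virtualUnits (pow_mem_nthPowers n _))
  convert mk0_mem_virtualUnits hn hnorm (J := Ideal.relNorm (𝓞 F) J)
    (by rw [← map_pow, hJ, Ideal.relNorm_singleton]) using 1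
  exact Units.ext (Algebra.algebraMap_intNorm (A := 𝓞 F) (B := 𝓞 K) (K := F) (L := K) a).symm

theorem valuationOfNeZero_map_of_unramified (v : HeightOneSpectrum (𝓞 F))
    (w : HeightOneSpectrum (𝓞 K)) [w.asIdeal.LiesOver v.asIdeal]
    (he : v.asIdeal.ramificationIdx' w.asIdeal = 1) (x : Fˣ) :
    w.valuationOfNeZero (Units.map (algebraMap F K : F →* K) x) = v.valuationOfNeZero x := by
  have h := HeightOneSpectrum.valuation_liesOver K v w (x : F)
  rw [he, pow_one] at h
  rw [← WithZero.coe_inj, HeightOneSpectrum.valuationOfNeZero_eq,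
    HeightOneSpectrum.valuationOfNeZero_eq, h]
  rfl

theorem two_mul_relIndex_comap_norm_le (hn : n ≠ 0) {u : Fˣ} (hu : u ∈ virtualUnits n F)
    (hnorm : u ∉ nthPowers n Fˣ ⊔ (Units.map (Algebra.norm F : K →* F)).range) :
    2 * ((nthPowers n Fˣ).comap (Units.map (Algebra.norm F : K →* F))).relIndex (virtualUnits n K) ≤
      selmerCard n F := by
  set N : Kˣ →* Fˣ := Units.map (Algebra.norm F : K →* F)
  set B : Subgroup Fˣ := nthPowers n Fˣ ⊔ (virtualUnits n K).map N
  have hB : B ≤ virtualUnits n F := sup_le nthPowers_le_virtualUnits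
    (Subgroup.map_le_iff_le_comap.mpr fun x => norm_mem_virtualUnits hn)
  have hu' : u ∉ B := fun h => hnorm (sup_le_sup_left (Subgroup.map_le_range _ _) _ h)
  have hmul : (nthPowers n Fˣ).relIndex B * B.relIndex (virtualUnits n F) = selmerCard n F :=
    Subgroup.relIndex_mul_relIndex _ _ _ le_sup_left hB
  have hne : B.relIndex (virtualUnits n F) ≠ 0 :=
    right_ne_zero_of_mul (hmul ▸ selmerCard_ne_zero hn)
  rw [Subgroup.relIndex_comap, ← Subgroup.relIndex_sup_left, ← hmul, mul_comm]
  exact Nat.mul_le_mul_left _ (two_le_relIndex hne hu hu')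

theorem relIndex_comap_virtualUnits (hn : n ≠ 0) (T : Finset (HeightOneSpectrum (𝓞 F)))
    (hT : ∀ v ∉ T, ∃ w : HeightOneSpectrum (𝓞 K), w.asIdeal.LiesOver v.asIdeal ∧
      v.asIdeal.ramificationIdx' w.asIdeal = 1) :
    (nthPowers n Fˣ).relIndex
        ((virtualUnits n K).comap (Units.map (algebraMap F K : F →* K))) ≠ 0 ∧
      (nthPowers n Fˣ).relIndex
        ((virtualUnits n K).comap (Units.map (algebraMap F K : F →* K))) ≤
      selmerCard n F * n ^ T.card := by
  set U := (virtualUnits n K).comap (Units.map (algebraMap F K : F →* K))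
  set E : HeightOneSpectrum (𝓞 F) → Subgroup Fˣ := fun v =>
    (nthPowers n (Multiplicative ℤ)).comap v.valuationOfNeZero
  set Z : Subgroup Fˣ := ⨅ v : T, E v
  have hdvd (v) : (E v).relIndex U ∣ n := by
    rw [Subgroup.relIndex_comap]
    exact (Subgroup.relIndex_dvd_index_of_normal _ _).trans
      (index_nthPowers_multiplicative_int n).dvd
  have hE (v) : (E v).relIndex U ≤ n := Nat.le_of_dvd (Nat.pos_of_ne_zero hn) (hdvd v)
  have hZ : Z.relIndex U ≤ n ^ T.card :=
    (Subgroup.relIndex_iInf_le _).trans <|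
      (Finset.prod_le_pow_card _ _ n fun v _ => hE v.1).trans_eq
        (by rw [Finset.card_univ, Fintype.card_coe])
  have hZ0 : Z.relIndex U ≠ 0 :=
    Subgroup.relIndex_iInf_ne_zero fun v => ne_zero_of_dvd_ne_zero hn (hdvd v)
  have hZU : Z ⊓ U ≤ virtualUnits n F := fun x hx =>
    (mem_virtualUnits_iff_forall hn).mpr fun v => by
      by_cases hv : v ∈ T
      · exact (Subgroup.mem_iInf.mp hx.1 ⟨v, hv⟩ :)
      · obtain ⟨w, hw, he⟩ := hT v hv
        rw [← valuationOfNeZero_map_of_unramified v w he]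
        exact (mem_virtualUnits_iff_forall hn).mp hx.2 w
  have hle : nthPowers n Fˣ ≤ Z ⊓ U := le_inf (le_iInf fun v => nthPowers_le_comap n _)
    ((nthPowers_le_comap n _).trans (Subgroup.comap_mono nthPowers_le_virtualUnits))
  have hmul := Subgroup.relIndex_mul_relIndex _ _ _ hle inf_le_right
  have hsel : (nthPowers n Fˣ).relIndex (virtualUnits n F) ≠ 0 := selmerCard_ne_zero hn
  rw [Subgroup.inf_relIndex_right] at hmul
  rw [← hmul]
  exact ⟨mul_ne_zero (fun h0 => hsel (Subgroup.relIndex_eq_zero_of_le_right hZU h0)) hZ0,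
    Nat.mul_le_mul (Subgroup.relIndex_le_of_le_right hZU hsel) hZ⟩

/-- The ambiguous class number bound. With `U` the elements of `Fˣ` that are virtual units of `K`,
the norm shows that the Selmer group of `K` is at most half of `|Sel F|` times larger than the image
of `U`, in which the square `δ` of `K` dies. -/
theorem four_mul_selmerCard_le (h2 : Module.finrank F K = 2) (T : Finset (HeightOneSpectrum (𝓞 F)))
    (hT : ∀ v ∉ T, ∃ w : HeightOneSpectrum (𝓞 K), w.asIdeal.LiesOver v.asIdeal ∧
      v.asIdeal.ramificationIdx' w.asIdeal = 1)
    {δ : Fˣ} (hδ : δ ∉ nthPowers 2 Fˣ)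
    (hδK : Units.map (algebraMap F K : F →* K) δ ∈ nthPowers 2 Kˣ)
    {u : Fˣ} (hu : u ∈ virtualUnits 2 F) (hnorm : ∀ β : K, Algebra.norm F β ≠ u) :
    4 * selmerCard 2 K ≤ selmerCard 2 F ^ 2 * 2 ^ T.card := by
  set N : Kˣ →* Fˣ := Units.map (Algebra.norm F : K →* F)
  set i : Fˣ →* Kˣ := Units.map (algebraMap F K : F →* K)
  set W : Subgroup Kˣ := (nthPowers 2 Fˣ).comap N ⊓ virtualUnits 2 K
  set U : Subgroup Fˣ := (virtualUnits 2 K).comap i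
  set S : Subgroup Fˣ := (nthPowers 2 Kˣ).comap i
  have hW : (nthPowers 2 Kˣ).relIndex W * W.relIndex (virtualUnits 2 K) = selmerCard 2 K :=
    Subgroup.relIndex_mul_relIndex _ _ _
      (le_inf (nthPowers_le_comap 2 N) nthPowers_le_virtualUnits) inf_le_right
  have hWnorm : 2 * W.relIndex (virtualUnits 2 K) ≤ selmerCard 2 F := by
    rw [Subgroup.inf_relIndex_right]
    refine two_mul_relIndex_comap_norm_le two_ne_zero hu ?_
    have hsq : nthPowers 2 Fˣ ≤ N.range := by
      rintro _ ⟨y, rfl⟩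
      exact ⟨i y, by ext; simp [N, i, Algebra.norm_algebraMap, h2]⟩
    rw [sup_eq_right.mpr hsq]
    rintro ⟨β, hβ⟩
    exact hnorm β (congrArg Units.val hβ)
  obtain ⟨hU0, hU⟩ := relIndex_comap_virtualUnits two_ne_zero T hT
  have hmul : (nthPowers 2 Fˣ).relIndex S * S.relIndex U = (nthPowers 2 Fˣ).relIndex U :=
    Subgroup.relIndex_mul_relIndex _ _ _ (nthPowers_le_comap 2 i)
      (Subgroup.comap_mono nthPowers_le_virtualUnits)
  have hS : 2 ≤ (nthPowers 2 Fˣ).relIndex S :=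
    two_le_relIndex (left_ne_zero_of_mul (hmul ▸ hU0)) hδK hδ
  calc 4 * selmerCard 2 K
      = 2 * (nthPowers 2 Kˣ).relIndex W * (2 * W.relIndex (virtualUnits 2 K)) := by
        rw [← hW]; ring
    _ ≤ (nthPowers 2 Fˣ).relIndex S * S.relIndex U * selmerCard 2 F := by
        gcongr
        exact relIndex_comap_norm_inf_le h2
    _ ≤ selmerCard 2 F * 2 ^ T.card * selmerCard 2 F := by
        rw [hmul]
        gcongr
    _ = selmerCard 2 F ^ 2 * 2 ^ T.card := by ring

end VirtualUnitsExtension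

section Discriminant

variable {F K : Type*} [Field F] [Field K] [NumberField F] [NumberField K] [Algebra F K]

theorem two_mul_sub_mem_differentIdeal (h2 : Module.finrank F K = 2) {ω : 𝓞 K} {b c : 𝓞 F}
    (hω : ω ^ 2 = algebraMap (𝓞 F) (𝓞 K) b * ω - algebraMap (𝓞 F) (𝓞 K) c)
    (hωF : ∀ f : F, algebraMap F K f ≠ ω) :
    2 * ω - algebraMap (𝓞 F) (𝓞 K) b ∈ differentIdeal (𝓞 F) (𝓞 K) := by
  open Polynomial in
  have hint : IsIntegral (𝓞 F) ω := Algebra.IsIntegral.isIntegral ω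
  have hmin : minpoly (𝓞 F) ω = X ^ 2 - C b * X + C c := by
    have hm : (X ^ 2 - C b * X + C c : (𝓞 F)[X]).Monic := by monicity!
    refine (eq_of_monic_of_dvd_of_natDegree_le (minpoly.monic hint) hm
      (minpoly.isIntegrallyClosed_dvd hint ?_) ?_).symm
    · simp only [map_add, map_sub, map_mul, map_pow, aeval_X, aeval_C, hω]; ring
    · have hdeg : (X ^ 2 - C b * X + C c : (𝓞 F)[X]).natDegree ≤ 2 := by compute_degree
      refine hdeg.trans ((minpoly.two_le_natDegree_iff hint).mpr ?_)
      rintro ⟨f, hf⟩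
      exact hωF f (by rw [← hf]; rfl)
  have hadj : Algebra.adjoin F {algebraMap (𝓞 K) K ω} = ⊤ := by
    have := Subalgebra.isSimpleOrder_of_finrank_prime F K (h2 ▸ Nat.prime_two)
    refine (eq_bot_or_eq_top _).resolve_left fun h => ?_
    obtain ⟨f, hf⟩ := Algebra.mem_bot.mp (h ▸ Algebra.self_mem_adjoin_singleton F _)
    exact hωF f hf
  have h := aeval_derivative_mem_differentIdeal (𝓞 F) F K ω hadj
  rw [hmin] at h
  simpa [one_add_one_eq_two, map_ofNat] using h

theorem sq_two_mul_sub {R S : Type*} [CommRing R] [CommRing S] [Algebra R S] {ω : S} {b c : R}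
    (hω : ω ^ 2 = algebraMap R S b * ω - algebraMap R S c) :
    (2 * ω - algebraMap R S b) ^ 2 = algebraMap R S (b ^ 2 - 4 * c) := by
  simp only [map_sub, map_mul, map_pow, map_ofNat]
  linear_combination 4 * hω

theorem exists_liesOver_ramificationIdx'_eq_one (h2 : Module.finrank F K = 2) {ω : 𝓞 K}
    {b c : 𝓞 F} (hω : ω ^ 2 = algebraMap (𝓞 F) (𝓞 K) b * ω - algebraMap (𝓞 F) (𝓞 K) c)
    (hωF : ∀ f : F, algebraMap F K f ≠ ω) {v : HeightOneSpectrum (𝓞 F)}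
    (hv : b ^ 2 - 4 * c ∉ v.asIdeal) :
    ∃ w : HeightOneSpectrum (𝓞 K), w.asIdeal.LiesOver v.asIdeal ∧
      v.asIdeal.ramificationIdx' w.asIdeal = 1 := by
  obtain ⟨Q, hQ, hQv⟩ := Ideal.exists_maximal_ideal_liesOver_of_isIntegral v.asIdeal (S := 𝓞 K)
  have h0 := Ideal.IsDedekindDomain.ramificationIdx'_ne_zero_of_liesOver Q v.ne_bot
  have h1 : v.asIdeal.ramificationIdx' Q < 2 := by
    refine Ideal.ramificationIdx'_lt fun h => hv ?_
    have hdvd : Q ∣ differentIdeal (𝓞 F) (𝓞 K) := by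
      simpa using pow_sub_one_dvd_differentIdeal (𝓞 F) Q 2 v.ne_bot (Ideal.dvd_iff_le.mpr h)
    rw [hQv.over, Ideal.mem_comap, ← sq_two_mul_sub hω]
    exact Ideal.pow_mem_of_mem Q
      (Ideal.dvd_iff_le.mp hdvd (two_mul_sub_mem_differentIdeal h2 hω hωF)) 2 two_pos
  exact ⟨⟨Q, hQ.isPrime, Ideal.ne_bot_of_liesOver_of_ne_bot v.ne_bot Q⟩, hQv,
    by change v.asIdeal.ramificationIdx' Q = 1; omega⟩

theorem not_isSquare_discrim {F K : Type*} [Field F] [CharZero F] [Field K] [Algebra F K] {ω : K}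
    {b c : F} (hω : ω ^ 2 = algebraMap F K b * ω - algebraMap F K c)
    (hωF : ∀ f : F, algebraMap F K f ≠ ω) : ¬ IsSquare (b ^ 2 - 4 * c) := by
  have : CharZero K := charZero_of_injective_algebraMap (algebraMap F K).injective
  rintro ⟨y, hy⟩
  have hd := sq_two_mul_sub hω
  rw [hy, map_mul, ← pow_two, sq_eq_sq_iff_eq_or_eq_neg] at hd
  rcases hd with h | h
  · refine hωF ((b + y) / 2) ?_
    rw [map_div₀, map_add, map_ofNat]
    linear_combination (-1 / 2) * h
  · refine hωF ((b - y) / 2) ?_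
    rw [map_div₀, map_sub, map_ofNat]
    linear_combination (-1 / 2) * h

theorem four_mul_selmerCard_le_of_discrim (h2 : Module.finrank F K = 2) {ω : 𝓞 K} {b c : 𝓞 F}
    (hω : ω ^ 2 = algebraMap (𝓞 F) (𝓞 K) b * ω - algebraMap (𝓞 F) (𝓞 K) c)
    (hωF : ∀ f : F, algebraMap F K f ≠ ω)
    (T : Finset (HeightOneSpectrum (𝓞 F))) (hT : ∀ v, b ^ 2 - 4 * c ∈ v.asIdeal → v ∈ T)
    {u : Fˣ} (hu : u ∈ virtualUnits 2 F) (hnorm : ∀ β : K, Algebra.norm F β ≠ u) :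
    4 * selmerCard 2 K ≤ selmerCard 2 F ^ 2 * 2 ^ T.card := by
  have hωK : (ω : K) ^ 2 = algebraMap F K b * ω - algebraMap F K c := by
    simpa only [map_sub, map_mul, map_pow, ← IsScalarTower.algebraMap_apply] using
      congrArg (algebraMap (𝓞 K) K) hω
  have hns := not_isSquare_discrim hωK hωF
  have hne : (b : F) ^ 2 - 4 * c ≠ 0 := fun h => hns (h ▸ IsSquare.zero)
  have hsq := sq_two_mul_sub hωK
  refine four_mul_selmerCard_le h2 T (δ := Units.mk0 _ hne)
    (fun v hv => exists_liesOver_ramificationIdx'_eq_one h2 hω hωF (mt (hT v) hv))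
    ?_ ?_ hu hnorm
  · rintro ⟨y, hy⟩
    exact hns ⟨y, by rw [← pow_two]; exact (congrArg Units.val hy).symm⟩
  · have hne' : 2 * (ω : K) - algebraMap F K b ≠ 0 := by
      rw [← pow_ne_zero_iff two_ne_zero, hsq]
      exact (map_ne_zero _).mpr hne
    exact ⟨Units.mk0 _ hne', by ext; exact hsq⟩

end Discriminant

section Quadratic

variable {F K : Type*} [Field F] [Field K] [Algebra F K]

/-- `K / F` is a quadratic extension generated by the square root `θ` of the nonsquare `d`. -/
structure IsQuadratic (F K : Type*) [Field F] [Field K] [Algebra F K] (d : F) (θ : K) : Prop where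
  finrank : Module.finrank F K = 2
  sq : θ ^ 2 = algebraMap F K d
  not_isSquare : ¬ IsSquare d

namespace IsQuadratic

variable {d : F} {θ : K}

theorem algebraMap_ne (h : IsQuadratic F K d θ) (f : F) : algebraMap F K f ≠ θ := fun hf =>
  h.not_isSquare ⟨f, (algebraMap F K).injective (by rw [← h.sq, ← hf, map_mul, pow_two])⟩

theorem eq_zero_of_add_mul_eq_zero (h : IsQuadratic F K d θ) {a b : F}
    (hab : algebraMap F K a + algebraMap F K b * θ = 0) : a = 0 ∧ b = 0 := by
  by_cases hb : b = 0
  · subst hb; simpa using hab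
  · refine (h.algebraMap_ne (-a / b) ?_).elim
    rw [map_div₀, map_neg, div_eq_iff ((map_ne_zero _).mpr hb)]
    linear_combination -hab

theorem exists_algEquiv (h : IsQuadratic F K d θ) :
    ∃ e : QuadraticAlgebra F d 0 ≃ₐ[F] K,
      ∀ z, e z = algebraMap F K z.re + algebraMap F K z.im * θ := by
  let f : QuadraticAlgebra F d 0 →ₐ[F] K := QuadraticAlgebra.lift
    ⟨θ, by rw [← pow_two, h.sq, zero_smul, add_zero, Algebra.algebraMap_eq_smul_one]⟩
  have hf (z) : f z = algebraMap F K z.re + algebraMap F K z.im * θ := by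
    simp [f, QuadraticAlgebra.lift, Algebra.smul_def]
  have hinj : Function.Injective f := (injective_iff_map_eq_zero f).mpr fun z hz => by
    obtain ⟨h0, h1⟩ := h.eq_zero_of_add_mul_eq_zero ((hf z).symm.trans hz)
    exact QuadraticAlgebra.ext h0 h1
  have : FiniteDimensional F K := Module.finite_of_finrank_eq_succ h.finrank
  have hbij : Function.Bijective f := ⟨hinj,
    (LinearMap.injective_iff_surjective_of_finrank_eq_finrank (f := f.toLinearMap)
      (by rw [QuadraticAlgebra.finrank_eq_two, h.finrank])).mp hinj⟩
  exact ⟨AlgEquiv.ofBijective f hbij, hf⟩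

theorem exists_coord (h : IsQuadratic F K d θ) (x : K) :
    ∃ a b : F, algebraMap F K a + algebraMap F K b * θ = x := by
  obtain ⟨e, he⟩ := h.exists_algEquiv
  obtain ⟨z, rfl⟩ := e.surjective x
  exact ⟨z.re, z.im, (he z).symm⟩

theorem norm_add_mul (h : IsQuadratic F K d θ) (a b : F) :
    Algebra.norm F (algebraMap F K a + algebraMap F K b * θ) = a ^ 2 - d * b ^ 2 := by
  obtain ⟨e, he⟩ := h.exists_algEquiv
  rw [← he ⟨a, b⟩, Algebra.norm_eq_of_algEquiv, Algebra.norm_apply]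
  refine (QuadraticAlgebra.det_toLinearMap_eq_norm (⟨a, b⟩ : QuadraticAlgebra F d 0)).trans ?_
  rw [QuadraticAlgebra.norm_def]
  ring

theorem exists_lift (h : IsQuadratic F K d θ) {Ω : Type*} [CommRing Ω] (φ : F →+* Ω) {w : Ω}
    (hw : w ^ 2 = φ d) : ∃ ψ : K →+* Ω, (∀ a, ψ (algebraMap F K a) = φ a) ∧ ψ θ = w := by
  obtain ⟨e, he⟩ := h.exists_algEquiv
  let := φ.toAlgebra
  let ψ : QuadraticAlgebra F d 0 →ₐ[F] Ω := QuadraticAlgebra.lift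
    ⟨w, by rw [← pow_two, hw, zero_smul, add_zero, ← Algebra.algebraMap_eq_smul_one]; rfl⟩
  refine ⟨(ψ.comp e.symm.toAlgHom).toRingHom, fun a => (ψ.comp e.symm.toAlgHom).commutes a, ?_⟩
  have hθ : e.symm θ = ⟨0, 1⟩ := (AlgEquiv.symm_apply_eq e).mpr (by simp [he])
  change ψ (e.symm θ) = w
  rw [hθ]
  simp [ψ, QuadraticAlgebra.lift]

theorem isSquare_or_isSquare_mul [CharZero F] (h : IsQuadratic F K d θ) {e : F}
    (he : IsSquare (algebraMap F K e)) : IsSquare e ∨ IsSquare (e * d) := by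
  obtain ⟨x, hx⟩ := he
  obtain ⟨a, b, rfl⟩ := h.exists_coord x
  obtain ⟨h1, h2⟩ := h.eq_zero_of_add_mul_eq_zero
    (a := a ^ 2 + d * b ^ 2 - e) (b := 2 * a * b) (by
      simp only [map_sub, map_add, map_mul, map_pow, map_ofNat, hx]
      linear_combination (-(algebraMap F K b) ^ 2) * h.sq)
  have h3 : a = 0 ∨ b = 0 := by simpa using h2
  rcases h3 with rfl | rfl
  · right; exact ⟨d * b, by linear_combination (-d) * h1⟩
  · left; exact ⟨a, by linear_combination (-1) * h1⟩

theorem exists_conj (h : IsQuadratic F K d θ) : ∃ c : K →+* K,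
    (∀ a, c (algebraMap F K a) = algebraMap F K a) ∧ c θ = -θ ∧
      ∀ x, x * c x = algebraMap F K (Algebra.norm F x) := by
  obtain ⟨c, hc, hθ⟩ := h.exists_lift (algebraMap F K) (w := -θ) (by rw [neg_sq, h.sq])
  refine ⟨c, hc, hθ, fun x => ?_⟩
  obtain ⟨a, b, rfl⟩ := h.exists_coord x
  rw [h.norm_add_mul, map_add, map_mul, hc, hc, hθ]
  simp only [map_sub, map_mul, map_pow]
  linear_combination (-(algebraMap F K b) ^ 2) * h.sq

end IsQuadratic

end Quadratic

section Padic

variable {ℓ : ℕ} [Fact ℓ.Prime]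

theorem natCast_not_dvd_of_isUnit {e : ℤ} (he : IsUnit e) : ¬ (ℓ : ℤ) ∣ e := fun h =>
  (Nat.prime_iff_prime_int.mp Fact.out).not_isUnit (isUnit_of_dvd_unit h he)

theorem not_dvd_of_legendreSym_ne_zero {c : ℤ} (hc : legendreSym ℓ c ≠ 0) : ¬ (ℓ : ℤ) ∣ c :=
  fun hd => hc ((legendreSym.eq_zero_iff ℓ c).mpr ((ZMod.intCast_zmod_eq_zero_iff_dvd _ _).mpr hd))

theorem padicNorm_intCast_eq_one {a : ℤ} (ha : ¬ (ℓ : ℤ) ∣ a) : ‖(a : ℚ_[ℓ])‖ = 1 :=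
  le_antisymm (Padic.norm_int_le_one a) (not_lt.mp (mt Padic.norm_intCast_lt_one_iff.mp ha))

theorem padicNorm_prime_mul_sq_ne (x : ℚ_[ℓ]) {y : ℚ_[ℓ]} (hy : y ≠ 0) :
    ‖(ℓ : ℚ_[ℓ]) * y ^ 2‖ ≠ ‖x ^ 2‖ := by
  intro h
  have hℓ1 : (1 : ℝ) < ℓ := mod_cast (Fact.out : ℓ.Prime).one_lt
  have hℓ0 : (0 : ℝ) < ℓ := one_pos.trans hℓ1
  rcases eq_or_ne x 0 with rfl | hx
  · simp [hy, (Fact.out : ℓ.Prime).ne_zero] at h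
  · rw [norm_mul, norm_pow, norm_pow, Padic.norm_p, Padic.norm_eq_zpow_neg_valuation hx,
      Padic.norm_eq_zpow_neg_valuation hy, ← zpow_natCast, ← zpow_natCast, ← zpow_mul, ← zpow_mul,
      ← zpow_neg_one, ← zpow_add₀ hℓ0.ne'] at h
    have := zpow_right_injective₀ hℓ0 hℓ1.ne' h
    push_cast at this
    omega

theorem one_le_padicNorm_sub_sq {c : ℤ} (hc : legendreSym ℓ c = -1) (x : ℚ_[ℓ]) :
    1 ≤ ‖(c : ℚ_[ℓ]) - x ^ 2‖ := by
  by_contra! h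
  have hx : ‖x‖ ≤ 1 := by
    have hx2 : ‖x ^ 2‖ ≤ 1 := by
      rw [← sub_sub_cancel (c : ℚ_[ℓ]) (x ^ 2), sub_eq_add_neg]
      exact (Padic.nonarchimedean _ _).trans
        (max_le (Padic.norm_int_le_one c) (by rw [norm_neg]; exact h.le))
    rwa [norm_pow, pow_le_one_iff_of_nonneg (norm_nonneg _) two_ne_zero] at hx2
  obtain ⟨u, rfl⟩ : ∃ u : ℤ_[ℓ], (u : ℚ_[ℓ]) = x := ⟨⟨x, hx⟩, rfl⟩
  have hmem : (c : ℤ_[ℓ]) - u ^ 2 ∈ IsLocalRing.maximalIdeal ℤ_[ℓ] := by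
    rw [IsLocalRing.mem_maximalIdeal, PadicInt.mem_nonunits, PadicInt.norm_def]
    exact_mod_cast h
  rw [← PadicInt.ker_toZMod, RingHom.mem_ker, map_sub, map_intCast, map_pow, sub_eq_zero] at hmem
  exact (legendreSym.eq_neg_one_iff ℓ).mp hc ⟨_, hmem.trans (pow_two _)⟩

theorem eq_zero_of_nonresidue {c e : ℤ} (hc : legendreSym ℓ c = -1) (he : ¬ (ℓ : ℤ) ∣ e)
    {x y z : ℚ_[ℓ]} (h : c * z ^ 2 = x ^ 2 + ℓ * e * y ^ 2) : z = 0 := by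
  by_contra hz
  have h' : (c : ℚ_[ℓ]) - (x / z) ^ 2 = ℓ * e * (y / z) ^ 2 := by
    field_simp
    linear_combination h
  have hnorm : ‖(ℓ : ℚ_[ℓ]) * e * (y / z) ^ 2‖ = ‖(ℓ : ℚ_[ℓ]) * (y / z) ^ 2‖ := by
    rw [norm_mul, norm_mul, norm_mul, padicNorm_intCast_eq_one he, mul_one]
  have hy : y / z ≠ 0 := by
    intro hy
    have := one_le_padicNorm_sub_sq hc (x / z)
    rw [h', hy] at this
    norm_num at this
  have hone : 1 < ‖(ℓ : ℚ_[ℓ]) * (y / z) ^ 2‖ := by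
    refine lt_of_le_of_ne ?_ ?_
    · rw [← hnorm, ← h']
      exact one_le_padicNorm_sub_sq hc _
    · simpa using (padicNorm_prime_mul_sq_ne (1 : ℚ_[ℓ]) hy).symm
  have hlt : ‖(c : ℚ_[ℓ])‖ < ‖(ℓ : ℚ_[ℓ]) * e * (y / z) ^ 2‖ :=
    (Padic.norm_int_le_one c).trans_lt (hnorm ▸ hone)
  refine padicNorm_prime_mul_sq_ne (x / z) hy ?_
  rw [show (x / z) ^ 2 = c - ℓ * e * (y / z) ^ 2 by linear_combination -h', sub_eq_add_neg,
    Padic.add_eq_max_of_ne (by rw [norm_neg]; exact hlt.ne), norm_neg, max_eq_right hlt.le, hnorm]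

theorem eq_zero_of_nonresidue_rat {c e : ℤ} (hc : legendreSym ℓ c = -1) (he : ¬ (ℓ : ℤ) ∣ e)
    {x y z : ℚ} (h : c * z ^ 2 = x ^ 2 + ℓ * e * y ^ 2) : z = 0 :=
  mod_cast eq_zero_of_nonresidue hc he (x := x) (y := y) (z := z) (mod_cast h)

theorem exists_padic_sqrt (h2 : ℓ ≠ 2) {c : ℤ} (hc : legendreSym ℓ c = 1) :
    ∃ w : ℚ_[ℓ], w ^ 2 = c := by
  have hcℓ := not_dvd_of_legendreSym_ne_zero (hc.trans_ne one_ne_zero)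
  obtain ⟨a, ha⟩ := (legendreSym.eq_one_iff ℓ
    (mt (ZMod.intCast_zmod_eq_zero_iff_dvd _ _).mp hcℓ)).mp hc
  obtain ⟨r, rfl⟩ := ZMod.intCast_surjective a
  have hr : (ℓ : ℤ) ∣ r ^ 2 - c := by
    rw [← ZMod.intCast_zmod_eq_zero_iff_dvd, Int.cast_sub, ha, Int.cast_pow, pow_two, sub_self]
  have hℓ : Prime (ℓ : ℤ) := Nat.prime_iff_prime_int.mp Fact.out
  have h2r : ¬ (ℓ : ℤ) ∣ 2 * r := by
    rw [hℓ.dvd_mul, not_or]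
    refine ⟨fun h => h2 ?_, fun h => hcℓ ?_⟩
    · exact (Nat.prime_dvd_prime_iff_eq Fact.out Nat.prime_two).mp (mod_cast h)
    · rw [← sub_sub_cancel (r ^ 2) c]
      exact dvd_sub (dvd_pow h two_ne_zero) hr
  let f : Polynomial ℤ := Polynomial.X ^ 2 - Polynomial.C c
  have hf : f.aeval (r : ℤ_[ℓ]) = ((r ^ 2 - c : ℤ) : ℤ_[ℓ]) := by simp [f]
  have hf' : f.derivative.aeval (r : ℤ_[ℓ]) = ((2 * r : ℤ) : ℤ_[ℓ]) := by simp [f, map_ofNat]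
  have hder : ‖((2 * r : ℤ) : ℤ_[ℓ])‖ = 1 :=
    le_antisymm (PadicInt.norm_le_one _)
      (not_lt.mp (mt (PadicInt.norm_int_lt_one_iff_dvd _).mp h2r))
  obtain ⟨z, hz, -⟩ := hensels_lemma (F := f) (a := (r : ℤ_[ℓ])) (by
    rw [hf, hf', hder, one_pow]
    exact (PadicInt.norm_int_lt_one_iff_dvd _).mpr hr)
  have hz' : z ^ 2 = c := by simpa [f, sub_eq_zero] using hz
  exact ⟨z, mod_cast congrArg (Subtype.val : ℤ_[ℓ] → ℚ_[ℓ]) hz'⟩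

end Padic

section Primes

variable {F : Type*} [Field F] [NumberField F]

theorem exists_finset_forall_le_mem {I : Ideal (𝓞 F)} (hI : I ≠ ⊥) {c : ℕ}
    (hc : ∀ v : HeightOneSpectrum (𝓞 F), I ≤ v.asIdeal → c ≤ Ideal.absNorm v.asIdeal) :
    ∃ T : Finset (HeightOneSpectrum (𝓞 F)), (∀ v, I ≤ v.asIdeal → v ∈ T) ∧
      c ^ T.card ≤ Ideal.absNorm I := by
  classical
  have hfin := Ideal.finite_factors hI
  refine ⟨hfin.toFinset, fun v hv => hfin.mem_toFinset.mpr (Ideal.dvd_iff_le.mpr hv), ?_⟩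
  have hdvd : ∏ J ∈ hfin.toFinset.image HeightOneSpectrum.asIdeal, J ∣ I := by
    refine Finset.prod_primes_dvd I (fun J hJ => ?_) (fun J hJ => ?_) <;>
      obtain ⟨v, hv, rfl⟩ := Finset.mem_image.mp hJ
    · exact v.prime
    · exact hfin.mem_toFinset.mp hv
  rw [Finset.prod_image fun v _ w _ h => HeightOneSpectrum.ext h] at hdvd
  calc c ^ hfin.toFinset.card
      ≤ ∏ v ∈ hfin.toFinset, Ideal.absNorm v.asIdeal := Finset.pow_card_le_prod _ _ _ fun v hv =>
        hc v (Ideal.dvd_iff_le.mp (hfin.mem_toFinset.mp hv))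
    _ = Ideal.absNorm (∏ v ∈ hfin.toFinset, v.asIdeal) := (map_prod _ _ _).symm
    _ ≤ Ideal.absNorm I := Nat.le_of_dvd (Nat.pos_of_ne_zero (mt Ideal.absNorm_eq_zero_iff.mp hI))
        (map_dvd Ideal.absNorm hdvd)

theorem absNorm_span_natCast (n : ℕ) :
    Ideal.absNorm (Ideal.span {(n : 𝓞 F)}) = n ^ Module.finrank ℚ F := by
  rw [Ideal.absNorm_span_singleton, ← map_natCast (algebraMap ℤ (𝓞 F)), Algebra.norm_algebraMap,
    RingOfIntegers.rank, Int.natAbs_pow, Int.natAbs_natCast]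

theorem exists_absNorm_eq_pow {ℓ : ℕ} (hℓ : ℓ.Prime) {v : Ideal (𝓞 F)} (hv1 : v ≠ ⊤)
    (hv : (ℓ : 𝓞 F) ∈ v) : ∃ f ≠ 0, Ideal.absNorm v = ℓ ^ f := by
  have hdvd : Ideal.absNorm v ∣ ℓ ^ Module.finrank ℚ F := by
    rw [← absNorm_span_natCast]
    exact Ideal.absNorm_dvd_absNorm_of_le ((Ideal.span_singleton_le_iff_mem _).mpr hv)
  obtain ⟨f, -, hf⟩ := (Nat.dvd_prime_pow hℓ).mp hdvd
  refine ⟨f, ?_, hf⟩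
  rintro rfl
  exact hv1 (Ideal.absNorm_eq_one_iff.mp hf)

theorem exists_int_sub_mem {v : Ideal (𝓞 F)} (hv : (Ideal.absNorm v).Prime) (x : 𝓞 F) :
    ∃ n : ℤ, x - n ∈ v := by
  have hcard : Nat.card (𝓞 F ⧸ v) = Ideal.absNorm v := (Ideal.absNorm_apply v).symm
  have : Finite (𝓞 F ⧸ v) := Nat.finite_of_card_ne_zero (hcard ▸ hv.ne_zero)
  have := Fintype.ofFinite (𝓞 F ⧸ v)
  let e := ZMod.ringEquivOfPrime (𝓞 F ⧸ v) hv (by rw [← Nat.card_eq_fintype_card, hcard])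
  obtain ⟨a, ha⟩ := e.surjective (Ideal.Quotient.mk v x)
  obtain ⟨n, rfl⟩ := ZMod.intCast_surjective a
  refine ⟨n, ?_⟩
  rw [← Ideal.Quotient.eq_zero_iff_mem, map_sub, ← ha, map_intCast, map_intCast, sub_self]

theorem intCast_mem_iff_of_prime_absNorm {v : Ideal (𝓞 F)} (hv : (Ideal.absNorm v).Prime) {n : ℤ} :
    (n : 𝓞 F) ∈ v ↔ (Ideal.absNorm v : ℤ) ∣ n := by
  rw [← Ideal.mem_span_singleton, Ideal.span_singleton_absNorm hv, Ideal.mem_comap,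
    algebraMap_int_eq, eq_intCast]

/- Were the residue field the prime field, the image of `ω` in it would be a root of
`X² - bX + c`. -/
theorem sq_le_absNorm_of_no_root {ℓ : ℕ} (hℓ : ℓ.Prime) {v : Ideal (𝓞 F)} (hv1 : v ≠ ⊤)
    (hv : (ℓ : 𝓞 F) ∈ v) {ω : 𝓞 F} {b c : ℤ} (hω : ω ^ 2 = b * ω - c)
    (hroot : ∀ n : ℤ, ¬ (ℓ : ℤ) ∣ n ^ 2 - b * n + c) : ℓ ^ 2 ≤ Ideal.absNorm v := by
  obtain ⟨f, hf, hN⟩ := exists_absNorm_eq_pow hℓ hv1 hv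
  rcases (show f = 1 ∨ 2 ≤ f by omega) with rfl | hf2
  · rw [pow_one] at hN
    obtain ⟨n, hn⟩ := exists_int_sub_mem (hN ▸ hℓ) ω
    refine (hroot n ?_).elim
    rw [← hN, ← intCast_mem_iff_of_prime_absNorm (hN ▸ hℓ)]
    convert v.mul_mem_left (b - ω - n) hn using 1
    push_cast
    linear_combination hω
  · rw [hN]
    exact Nat.pow_le_pow_right hℓ.pos hf2

theorem exists_finset_forall_natCast_mem {n : ℕ} (hn : n ≠ 0) :
    ∃ T : Finset (HeightOneSpectrum (𝓞 F)), (∀ v, (n : 𝓞 F) ∈ v.asIdeal → v ∈ T) ∧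
      T.card ≤ n.primeFactors.card * Module.finrank ℚ F := by
  classical
  have hprime (ℓ : ℕ) (hℓ : ℓ ∈ n.primeFactors) :
      ∃ T : Finset (HeightOneSpectrum (𝓞 F)), (∀ v, (ℓ : 𝓞 F) ∈ v.asIdeal → v ∈ T) ∧
        T.card ≤ Module.finrank ℚ F := by
    have hℓ := Nat.prime_of_mem_primeFactors hℓ
    obtain ⟨T, hT, hcard⟩ := exists_finset_forall_le_mem (I := Ideal.span {(ℓ : 𝓞 F)}) (c := ℓ)
      (by simpa using hℓ.ne_zero) (fun v hv => by
        obtain ⟨f, hf, hN⟩ := exists_absNorm_eq_pow hℓ v.isPrime.ne_top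
          ((Ideal.span_singleton_le_iff_mem _).mp hv)
        exact hN ▸ Nat.le_self_pow hf ℓ)
    rw [absNorm_span_natCast, Nat.pow_le_pow_iff_right hℓ.one_lt] at hcard
    exact ⟨T, fun v hv => hT v ((Ideal.span_singleton_le_iff_mem _).mpr hv), hcard⟩
  choose! T hT hcard using hprime
  refine ⟨n.primeFactors.biUnion T, fun v hv => ?_, Finset.card_biUnion_le_card_mul _ _ _ hcard⟩
  have hprod : ∏ ℓ ∈ n.primeFactors, (ℓ : 𝓞 F) ^ n.factorization ℓ ∈ v.asIdeal := by
    have := Nat.prod_factorization_pow_eq_self hn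
    rw [Finsupp.prod, Nat.support_factorization] at this
    exact_mod_cast this.symm ▸ hv
  obtain ⟨ℓ, hℓ, hmem⟩ := (Ideal.IsPrime.prod_mem_iff (hp := v.isPrime)).mp hprod
  exact Finset.mem_biUnion.mpr ⟨ℓ, hℓ, hT ℓ hℓ v (v.isPrime.mem_of_pow_mem _ hmem)⟩

end Primes

section UnitRank

variable {K : Type*} [Field K]

theorem isTotallyComplex_of_sq_eq {x : K} {d : ℤ} (hd : d < 0) (hx : x ^ 2 = d) :
    IsTotallyComplex K where
  isComplex w := by
    rw [← InfinitePlace.not_isReal_iff_isComplex]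
    intro hw
    have hsq : InfinitePlace.embedding_of_isReal hw x ^ 2 = d := by rw [← map_pow, hx, map_intCast]
    have hd' : (d : ℝ) < 0 := mod_cast hd
    exact (sq_nonneg (InfinitePlace.embedding_of_isReal hw x)).not_gt (hsq ▸ hd')

variable [NumberField K]

theorem two_mul_rank_add_one [IsTotallyComplex K] :
    2 * (Units.rank K + 1) = Module.finrank ℚ K := by
  have hpos : 0 < Module.finrank ℚ K := Module.finrank_pos
  rw [IsTotallyComplex.finrank] at hpos ⊢
  rw [Units.rank, InfinitePlace.card_eq_nrRealPlaces_add_nrComplexPlaces,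
    IsTotallyComplex.nrRealPlaces_eq_zero]
  omega

theorem nrRealPlaces_ne_zero_of_ringHom (ψ : K →+* ℝ) : InfinitePlace.nrRealPlaces K ≠ 0 := by
  rw [Ne, nrRealPlaces_eq_zero_iff]
  intro h
  refine h.complexEmbedding_not_isReal (Complex.ofRealHom.comp ψ) ?_
  rw [ComplexEmbedding.isReal_iff]
  ext x
  simp [ComplexEmbedding.conjugate]

theorem IsQuadratic.rank_eq_zero {d : ℤ} {θ : K} (h : IsQuadratic ℚ K d θ) (hd : d < 0) :
    Units.rank K = 0 := by
  have := isTotallyComplex_of_sq_eq hd (by simpa using h.sq)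
  have := two_mul_rank_add_one (K := K)
  rw [h.finrank] at this
  omega

theorem IsQuadratic.rank_eq_one {d : ℤ} {θ : K} (h : IsQuadratic ℚ K d θ) (hd : 0 < d) :
    Units.rank K = 1 := by
  obtain ⟨ψ, -⟩ := h.exists_lift (algebraMap ℚ ℝ) (w := √d) (by
    rw [Real.sq_sqrt (mod_cast hd.le)]
    simp)
  have hreal := nrRealPlaces_ne_zero_of_ringHom ψ
  have hfin := InfinitePlace.card_add_two_mul_card_eq_rank K
  rw [h.finrank] at hfin
  rw [Units.rank, InfinitePlace.card_eq_nrRealPlaces_add_nrComplexPlaces]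
  omega

theorem rank_rat : Units.rank ℚ = 0 := by
  have hfin := InfinitePlace.card_add_two_mul_card_eq_rank ℚ
  rw [Module.finrank_self] at hfin
  rw [Units.rank, InfinitePlace.card_eq_nrRealPlaces_add_nrComplexPlaces]
  omega

end UnitRank

section Selmer

variable {F K : Type*} [Field F] [Field K] [Algebra F K] {θ : K}

theorem IsQuadratic.exists_integer_sqrt {d : 𝓞 F} (h : IsQuadratic F K (d : F) θ) :
    ∃ ω : 𝓞 K, ω = θ ∧ ω ^ 2 = algebraMap (𝓞 F) (𝓞 K) d :=
  ⟨⟨θ, .of_pow two_pos (h.sq ▸ (RingOfIntegers.isIntegral_coe d).algebraMap)⟩, rfl,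
    RingOfIntegers.ext h.sq⟩

theorem IsQuadratic.exists_intCast_sqrt {d : ℤ} (h : IsQuadratic F K d θ) :
    ∃ ω : 𝓞 K, ω = θ ∧ ω ^ 2 = d := by
  simpa using IsQuadratic.exists_integer_sqrt (d := (d : 𝓞 F)) (by simpa using h)

variable [NumberField F] [NumberField K]

theorem neg_one_mem_virtualUnits : (-1 : Fˣ) ∈ virtualUnits 2 F := by
  have := mk0_mem_virtualUnits (K := F) two_ne_zero (a := -1) (J := ⊤) (by simp)
    (by rw [Ideal.span_singleton_neg, Ideal.span_singleton_one, Ideal.top_pow])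
  rwa [show Units.mk0 (algebraMap (𝓞 F) F (-1)) _ = -1 from Units.ext (by simp)] at this

theorem IsQuadratic.four_mul_selmerCard_le {d : 𝓞 F} (h : IsQuadratic F K (d : F) θ)
    (T : Finset (HeightOneSpectrum (𝓞 F))) (hT : ∀ v, 4 * d ∈ v.asIdeal → v ∈ T) {u : Fˣ}
    (hu : u ∈ virtualUnits 2 F) (hnorm : ∀ a b : F, a ^ 2 - d * b ^ 2 ≠ u) :
    4 * selmerCard 2 K ≤ selmerCard 2 F ^ 2 * 2 ^ T.card := by
  obtain ⟨ω, rfl, hω⟩ := h.exists_integer_sqrt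
  refine four_mul_selmerCard_le_of_discrim h.finrank (ω := ω) (b := 0) (c := -d)
    ?_ h.algebraMap_ne T (fun v hv => hT v ?_) hu fun β => ?_
  · rw [hω, map_zero, zero_mul, zero_sub, map_neg, neg_neg]
  · convert hv using 1
    ring
  · obtain ⟨a, b, rfl⟩ := h.exists_coord β
    rw [h.norm_add_mul]
    exact hnorm a b

theorem selmerCard_two_rat : selmerCard 2 ℚ = 2 := by
  have hcl : Nat.card (ClassGroup (𝓞 ℚ)) = 1 :=
    Nat.card_eq_fintype_card.trans Rat.classNumber_eq
  have htors : Nat.card (nthTorsion 2 (ClassGroup (𝓞 ℚ))) = 1 :=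
    Nat.dvd_one.mp (hcl ▸ Subgroup.card_subgroup_dvd_card _)
  rw [selmerCard_two, rank_rat, htors]
  norm_num

theorem IsQuadratic.selmerCard_two_le {d : ℤ} (h : IsQuadratic ℚ K d θ)
    (hnorm : ∀ a b : ℚ, a ^ 2 - d * b ^ 2 ≠ -1) :
    selmerCard 2 K ≤ 2 ^ (2 * d.natAbs).primeFactors.card := by
  have hd : d ≠ 0 := by
    rintro rfl
    exact h.not_isSquare ⟨0, by simp⟩
  obtain ⟨T, hT, hc⟩ := exists_finset_forall_natCast_mem (F := ℚ) (n := 2 * d.natAbs) (by simpa)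
  rw [Module.finrank_self, mul_one] at hc
  have := IsQuadratic.four_mul_selmerCard_le (d := (d : 𝓞 ℚ)) (by simpa using h) T
    (fun v hv => hT v (v.isPrime.mem_of_pow_mem 2 ?_)) neg_one_mem_virtualUnits
    (by simpa using hnorm)
  · rw [selmerCard_two_rat] at this
    exact (by omega : selmerCard 2 K ≤ 2 ^ T.card).trans (Nat.pow_le_pow_right two_pos hc)
  · have habs : ((d.natAbs : 𝓞 ℚ)) ^ 2 = d ^ 2 :=  by
      rw [← Int.cast_natCast, ← Int.cast_pow, Int.natAbs_sq, Int.cast_pow]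
    convert v.asIdeal.mul_mem_right (d : 𝓞 ℚ) hv using 1
    push_cast
    linear_combination 4 * habs

theorem card_nthTorsion_le_of_selmerCard_le {c : ℕ}
    (h : selmerCard 2 F ≤ 2 ^ (Units.rank F + 1) * c) :
    Nat.card (nthTorsion 2 (ClassGroup (𝓞 F))) ≤ c :=
  Nat.le_of_mul_le_mul_left (selmerCard_two (K := F) ▸ h) (by positivity)

theorem not_dvd_card_of_card_nthTorsion_lt {ℓ : ℕ} [hℓ : Fact ℓ.Prime] {G : Type*} [CommGroup G]
    [Finite G] (h : Nat.card (nthTorsion ℓ G) < ℓ) : ¬ ℓ ∣ Nat.card G := by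
  intro hdvd
  obtain ⟨x, hx⟩ := exists_prime_orderOf_dvd_card' ℓ hdvd
  have hle : Subgroup.zpowers x ≤ nthTorsion ℓ G := by
    rw [Subgroup.zpowers_le, mem_nthTorsion, ← hx, pow_orderOf_eq_one]
  have := Subgroup.card_le_of_le hle
  rw [Nat.card_zpowers, hx] at this
  omega

theorem odd_card_of_card_nthTorsion_le_one {G : Type*} [CommGroup G] [Finite G]
    (h : Nat.card (nthTorsion 2 G) ≤ 1) : Odd (Nat.card G) :=
  Nat.not_even_iff_odd.mp fun heven =>
    not_dvd_card_of_card_nthTorsion_lt (Nat.lt_succ_of_le h) heven.two_dvd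

end Selmer

section Residues

variable {p q : ℕ} [Fact p.Prime] [Fact q.Prime]

/-- Residue symbols attached to the primes `p ≡ 3`, `q ≡ 7` modulo `8` with `(p/q) = -1`. -/
structure Residues (p q : ℕ) [Fact p.Prime] [Fact q.Prime] : Prop where
  p_mod : p % 8 = 3
  q_mod : q % 8 = 7
  p_two : legendreSym p 2 = -1
  p_neg_one : legendreSym p (-1) = -1
  p_neg_two : legendreSym p (-2) = 1
  p_q : legendreSym p q = 1
  q_p : legendreSym q p = -1
  q_neg_one : legendreSym q (-1) = -1
  q_two : legendreSym q 2 = 1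
  q_neg_two : legendreSym q (-2) = -1
  q_neg_p : legendreSym q (-p) = 1

theorem Residues.p_ne_two (hpq : Residues p q) : p ≠ 2 := by
  rintro rfl
  simpa using hpq.p_mod

theorem Residues.q_ne_two (hpq : Residues p q) : q ≠ 2 := by
  rintro rfl
  simpa using hpq.q_mod

theorem Residues.ne (hpq : Residues p q) : p ≠ q := by
  rintro rfl
  simpa [hpq.p_mod] using hpq.q_mod

theorem legendreSym_neg_of_three_mod_four (hp : p % 4 = 3) (a : ℤ) :
    legendreSym p (-a) = -legendreSym p a := by
  rw [← neg_one_mul, legendreSym.mul, legendreSym.at_neg_one (by rintro rfl; simp at hp),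
    ZMod.χ₄_nat_three_mod_four hp, neg_one_mul]

theorem Residues.of_cond2 (h : Cond2 p q) : Residues p q := by
  obtain ⟨-, -, hp4, hq4, hp2, hq2, hqp⟩ := h
  rw [← jacobiSym.legendreSym.to_jacobiSym] at hp2 hq2 hqp
  have hp8 := legendreSym.at_two (p := p) (by rintro rfl; simp at hp4)
  have hq8 := legendreSym.at_two (p := q) (by rintro rfl; simp at hq4)
  rw [hp2, ZMod.χ₈_nat_eq_if_mod_eight] at hp8
  rw [hq2, ZMod.χ₈_nat_eq_if_mod_eight] at hq8
  have hrec := legendreSym.quadratic_reciprocity_three_mod_four hp4 hq4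
  have hp := legendreSym_neg_of_three_mod_four hp4
  have hq := legendreSym_neg_of_three_mod_four hq4
  exact
    { p_mod := by split_ifs at hp8; omega
      q_mod := by split_ifs at hq8 <;> omega
      p_two := hp2
      p_neg_one := by rw [hp, legendreSym.at_one]
      p_neg_two := by rw [hp, hp2, neg_neg]
      p_q := by rw [← neg_neg (legendreSym p q), ← hrec, hqp, neg_neg]
      q_p := hqp
      q_neg_one := by rw [hq, legendreSym.at_one]
      q_two := hq2
      q_neg_two := by rw [hq, hq2]
      q_neg_p := by rw [hq, hqp, neg_neg] }

theorem legendreSym_pow_of_odd {c : ℤ} (hc : legendreSym p c = -1) {n : ℕ} (hn : Odd n) :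
    legendreSym p (c ^ n) = -1 := by
  rw [← legendreSym.hom_apply, map_pow, legendreSym.hom_apply, hc, hn.neg_one_pow]

end Residues

section QuadraticIntegers

variable {p q : ℕ} [Fact p.Prime] [hq : Fact q.Prime] {K : Type*} [Field K] [NumberField K]

theorem odd_card_classGroup_sqrt_neg_two {A : K} (h : IsQuadratic ℚ K (-2 : ℤ) A) :
    Odd (Nat.card (ClassGroup (𝓞 K))) := by
  refine odd_card_of_card_nthTorsion_le_one (card_nthTorsion_le_of_selmerCard_le ?_)
  rw [h.rank_eq_zero (by norm_num)]
  refine (h.selmerCard_two_le fun a b hab => ?_).trans ?_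
  · push_cast at hab
    nlinarith [sq_nonneg a, sq_nonneg b]
  · rw [show 2 * (-2 : ℤ).natAbs = 2 ^ 2 by norm_num,
      Nat.primeFactors_prime_pow two_ne_zero Nat.prime_two, Finset.card_singleton]
    norm_num

theorem card_primeFactors_two_pow_mul_le (k : ℕ) : (2 ^ k * q).primeFactors.card ≤ 2 := by
  refine (Finset.card_le_card fun ℓ hℓ => ?_).trans (Finset.card_le_two (a := 2) (b := q))
  obtain ⟨hprime, hdvd, -⟩ := Nat.mem_primeFactors.mp hℓ
  rw [Finset.mem_insert, Finset.mem_singleton, ← Nat.prime_dvd_prime_iff_eq hprime Nat.prime_two,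
    ← Nat.prime_dvd_prime_iff_eq hprime hq.out]
  exact (hprime.dvd_mul.mp hdvd).imp_left hprime.dvd_of_dvd_pow

theorem card_nthTorsion_classGroup_sqrt_neg_two_mul_le {D : K}
    (h : IsQuadratic ℚ K (-2 * q : ℤ) D) : Nat.card (nthTorsion 2 (ClassGroup (𝓞 K))) ≤ 2 := by
  have hd : (-2 * q : ℤ) < 0 := by have := hq.out.pos; omega
  refine card_nthTorsion_le_of_selmerCard_le ?_
  rw [IsQuadratic.rank_eq_zero (d := -2 * q) (mod_cast h) hd]
  refine (IsQuadratic.selmerCard_two_le (d := -2 * q) (mod_cast h) fun a b hab => ?_).trans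
    (show _ ≤ 2 ^ 2 from Nat.pow_le_pow_right two_pos ?_)
  · have hd' : ((-2 * q : ℤ) : ℚ) < 0 := mod_cast hd
    nlinarith [sq_nonneg a, mul_nonneg (neg_nonneg.mpr hd'.le) (sq_nonneg b)]
  · rw [Int.natAbs_mul, Int.natAbs_natCast, ← mul_assoc]
    exact card_primeFactors_two_pow_mul_le (q := q) 2

theorem odd_card_classGroup_sqrt (hpq : Residues p q) {B : K} (h : IsQuadratic ℚ K (q : ℤ) B) :
    Odd (Nat.card (ClassGroup (𝓞 K))) := by
  refine odd_card_of_card_nthTorsion_le_one (card_nthTorsion_le_of_selmerCard_le ?_)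
  rw [h.rank_eq_one (mod_cast hq.out.pos)]
  refine (h.selmerCard_two_le fun a b hab => ?_).trans
    (show _ ≤ 2 ^ 2 from Nat.pow_le_pow_right two_pos ?_)
  · exact one_ne_zero (eq_zero_of_nonresidue_rat hpq.q_neg_one
      (natCast_not_dvd_of_isUnit isUnit_one.neg) (x := a) (y := b) (z := 1)
      (by push_cast at hab ⊢; linear_combination -hab))
  · exact card_primeFactors_two_pow_mul_le (q := q) 1

end QuadraticIntegers

section DegreeOnePrimes

variable {F K : Type*} [Field F] [NumberField F] [Field K] [NumberField K] [Algebra F K]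
  {ℓ : ℕ} [hℓ : Fact ℓ.Prime]

theorem exists_ringHom_padicInt {F : Type*} [Field F] (ψ : F →+* ℚ_[ℓ]) :
    ∃ f : 𝓞 F →+* ℤ_[ℓ], ∀ x : 𝓞 F, (f x : ℚ_[ℓ]) = ψ x := by
  have hint (x : 𝓞 F) : ‖ψ x‖ ≤ 1 := by
    obtain ⟨y, hy⟩ := IsIntegrallyClosed.isIntegral_iff.mp
      (((RingOfIntegers.isIntegral_coe x).map ψ.toIntAlgHom).tower_top (A := ℤ_[ℓ]))
    exact hy ▸ y.2
  exact ⟨(ψ.comp (algebraMap (𝓞 F) F)).codRestrict (PadicInt.subring ℓ) hint, fun _ => rfl⟩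

theorem natCast_notMem_sq_of_map_le {S : Type*} [CommRing S] (f : S →+* ℤ_[ℓ]) {I : Ideal S}
    (hI : I.map f ≤ Ideal.span {(ℓ : ℤ_[ℓ])}) : (ℓ : S) ∉ I ^ 2 := by
  intro hmem
  have hmem' : f ℓ ∈ (I ^ 2).map f := Ideal.mem_map_of_mem f hmem
  have hdvd : (ℓ : ℤ_[ℓ]) ^ 2 ∣ ℓ ^ 1 := by
    rw [map_natCast, Ideal.map_pow] at hmem'
    rw [← Ideal.mem_span_singleton, ← Ideal.span_singleton_pow, pow_one]
    exact Ideal.pow_right_mono hI 2 hmem'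
  have := (pow_dvd_pow_iff PadicInt.prime_p.ne_zero PadicInt.prime_p.not_isUnit).mp hdvd
  omega

theorem exists_absNorm_eq_and_le_sq_sup (ψ : F →+* ℚ_[ℓ]) :
    ∃ I : Ideal (𝓞 F), Ideal.absNorm I = ℓ ∧ I ≤ I ^ 2 ⊔ Ideal.span {(ℓ : 𝓞 F)} := by
  obtain ⟨f, -⟩ := exists_ringHom_padicInt ψ
  let φ : 𝓞 F →+* ZMod ℓ := PadicInt.toZMod.comp f
  have hnorm : Ideal.absNorm (RingHom.ker φ) = ℓ := by
    rw [Ideal.absNorm_apply, Submodule.cardQuot_apply]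
    exact (Nat.card_congr (RingHom.quotientKerEquivOfSurjective
      (ZMod.ringHom_surjective φ)).toEquiv).trans (Nat.card_zmod ℓ)
  have hmem : (ℓ : 𝓞 F) ∈ RingHom.ker φ := by
    rw [RingHom.mem_ker, map_natCast, ZMod.natCast_self]
  have hmap : (RingHom.ker φ).map f ≤ Ideal.span {(ℓ : ℤ_[ℓ])} := by
    rw [Ideal.map_le_iff_le_comap, ← PadicInt.maximalIdeal_eq_span_p, ← PadicInt.ker_toZMod,
      RingHom.comap_ker]
  have hprime : (RingHom.ker φ).IsPrime := RingHom.ker_isPrime φ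
  refine ⟨RingHom.ker φ, hnorm, (Ideal.eq_prime_pow_of_succ_lt_of_le (i := 1) ?_ ?_ ?_).ge.trans'
    (pow_one _).ge⟩
  · rintro h
    rw [h, Ideal.absNorm_bot] at hnorm
    exact hℓ.out.ne_zero hnorm.symm
  · refine left_lt_sup.mpr fun hle => natCast_notMem_sq_of_map_le f hmap ?_
    exact hle (Ideal.mem_span_singleton_self _)
  · rw [pow_one, sup_le_iff, Ideal.span_singleton_le_iff_mem]
    exact ⟨Ideal.pow_le_self two_ne_zero, hmem⟩

theorem sup_span_sq_eq {S : Type*} [CommRing S] {J : Ideal S} {c : S} (hc : c ^ 2 ∈ J)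
    (hJ : J ≤ J ^ 2 ⊔ Ideal.span {c ^ 2}) : (J ⊔ Ideal.span {c}) ^ 2 = J := by
  apply le_antisymm
  · rw [pow_two, Ideal.mul_sup, Ideal.sup_mul, Ideal.sup_mul]
    refine sup_le (sup_le Ideal.mul_le_left Ideal.mul_le_right) (sup_le Ideal.mul_le_left ?_)
    rwa [Ideal.span_singleton_mul_span_singleton, Ideal.span_singleton_le_iff_mem, ← pow_two]
  · refine hJ.trans (sup_le (Ideal.pow_right_mono le_sup_left 2) ?_)
    rw [Ideal.span_singleton_le_iff_mem]
    exact Ideal.pow_mem_pow (Ideal.mem_sup_right (Ideal.mem_span_singleton_self _)) 2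

theorem absNorm_map_algebraMap (I : Ideal (𝓞 F)) :
    Ideal.absNorm (I.map (algebraMap (𝓞 F) (𝓞 K))) = Ideal.absNorm I ^ Module.finrank F K := by
  rw [Ideal.absNorm_algebraMap, ← IsFractionRing.finrank_eq (𝓞 F) F (𝓞 K) K]

theorem exists_sq_eq_map_of_ringHom_padic {θ : K} (h : IsQuadratic F K (-ℓ : ℤ) θ)
    (ψ : F →+* ℚ_[ℓ]) : ∃ (I : Ideal (𝓞 F)) (P : Ideal (𝓞 K)), Ideal.absNorm I = ℓ ∧
      Ideal.absNorm P = ℓ ∧ P ^ 2 = I.map (algebraMap (𝓞 F) (𝓞 K)) := by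
  obtain ⟨I, hI, hle⟩ := exists_absNorm_eq_and_le_sq_sup ψ
  obtain ⟨c, -, hc⟩ := h.exists_intCast_sqrt
  have hc' : c ^ 2 = algebraMap (𝓞 F) (𝓞 K) (-ℓ) := by rw [hc]; simp
  have hmem : (-ℓ : 𝓞 F) ∈ I := neg_mem (hI ▸ Ideal.absNorm_mem I)
  have hsq := sup_span_sq_eq (J := I.map (algebraMap (𝓞 F) (𝓞 K))) (c := c)
    (hc' ▸ Ideal.mem_map_of_mem _ hmem) (by
      rw [hc', ← Set.image_singleton, ← Ideal.map_span, ← Ideal.map_pow, ← Ideal.map_sup,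
        Ideal.span_singleton_neg]
      exact Ideal.map_mono hle)
  refine ⟨I, _, hI, Nat.pow_left_injective two_ne_zero ?_, hsq⟩
  change _ ^ 2 = ℓ ^ 2
  rw [← map_pow, hsq, absNorm_map_algebraMap, hI, h.finrank]

theorem ne_bot_of_absNorm_eq {I : Ideal (𝓞 F)} (hI : Ideal.absNorm I = ℓ) : I ≠ ⊥ := by
  rintro rfl
  exact hℓ.out.ne_zero (hI ▸ Ideal.absNorm_bot)

theorem exists_pow_eq_span {I : Ideal (𝓞 F)} (hI : I ≠ ⊥) {n : ℕ}
    (hn : Nat.card (ClassGroup (𝓞 F)) ∣ n) : ∃ x, I ^ n = Ideal.span {x} := by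
  have h1 : ClassGroup.mk0 ⟨I, mem_nonZeroDivisors_of_ne_zero hI⟩ ^ n = 1 := by
    obtain ⟨c, rfl⟩ := hn
    rw [pow_mul, pow_card_eq_one', one_pow]
  rw [← map_pow] at h1
  exact ((ClassGroup.mk0_eq_one_iff (I := I ^ n)
    (mem_nonZeroDivisors_of_ne_zero (pow_ne_zero n hI))).mp h1).principal

theorem absNorm_span_eq_abs_norm (x : 𝓞 F) :
    (Ideal.absNorm (Ideal.span {x}) : ℚ) = |Algebra.norm ℚ (x : F)| := by
  rw [Ideal.absNorm_span_singleton, Nat.cast_natAbs, Int.cast_abs, Algebra.coe_norm_int]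

theorem IsQuadratic.norm_nonneg {d : ℤ} {θ : F} (h : IsQuadratic ℚ F d θ) (hd : d < 0) (x : F) :
    0 ≤ Algebra.norm ℚ x := by
  obtain ⟨a, b, rfl⟩ := h.exists_coord x
  have hd' : (d : ℚ) < 0 := mod_cast hd
  rw [h.norm_add_mul]
  nlinarith [sq_nonneg a, mul_nonneg (neg_nonneg.mpr hd'.le) (sq_nonneg b)]

theorem IsQuadratic.absNorm_span {d : ℤ} {θ : F} (h : IsQuadratic ℚ F d θ) (hd : d < 0)
    (x : 𝓞 F) : (Ideal.absNorm (Ideal.span {x}) : ℚ) = Algebra.norm ℚ (x : F) := by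
  rw [absNorm_span_eq_abs_norm, abs_of_nonneg (h.norm_nonneg hd x)]

theorem mul_conj_eq_intNorm {c : K →+* K}
    (hc : ∀ x, x * c x = algebraMap F K (Algebra.norm F x)) (x : 𝓞 K) :
    (x : K) * c x = algebraMap F K (Algebra.intNorm (𝓞 F) (𝓞 K) x : 𝓞 F) :=
  (hc x).trans (congrArg _ (Algebra.algebraMap_intNorm (K := F) (L := K) x).symm)

theorem mul_map_conj_eq_map_relNorm {c : K →+* K}
    (hc : ∀ x, x * c x = algebraMap F K (Algebra.norm F x)) {I : Ideal (𝓞 K)} (hI : I ≠ ⊥) :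
    I * I.map (RingOfIntegers.mapRingHom c) =
      (Ideal.relNorm (𝓞 F) I).map (algebraMap (𝓞 F) (𝓞 K)) := by
  obtain ⟨β, hβ⟩ := exists_pow_eq_span hI dvd_rfl
  have hnorm : β * RingOfIntegers.mapRingHom c β =
      algebraMap (𝓞 F) (𝓞 K) (Algebra.intNorm (𝓞 F) (𝓞 K) β) := 
    RingOfIntegers.ext (mul_conj_eq_intNorm hc β)
  have hcard : Nat.card (ClassGroup (𝓞 K)) ≠ 0 := Nat.card_pos.ne'
  have hpow : (I * I.map (RingOfIntegers.mapRingHom c)) ^ Nat.card (ClassGroup (𝓞 K)) =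
      (Ideal.relNorm (𝓞 F) I).map (algebraMap (𝓞 F) (𝓞 K)) ^ Nat.card (ClassGroup (𝓞 K)) := by
    rw [mul_pow, ← Ideal.map_pow, ← Ideal.map_pow, ← map_pow, hβ, Ideal.relNorm_singleton,
      Ideal.map_span, Ideal.map_span, Set.image_singleton, Set.image_singleton,
      Ideal.span_singleton_mul_span_singleton, hnorm]
  exact pow_left_injective hcard hpow

end DegreeOnePrimes

section HalfInteger

variable {F K : Type*} [Field F] [Field K] [NumberField K] [Algebra F K] {θ : K}

theorem IsQuadratic.exists_half_integer {d n : ℤ} (h : IsQuadratic F K d θ) (hn : 4 * n = 1 - d) :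
    ∃ ω : 𝓞 K, 2 * (ω : K) = 1 + θ ∧ ω ^ 2 = ω - n := by
  have hnK : (4 : K) * n = 1 - d := mod_cast congrArg (Int.cast : ℤ → K) hn
  have hsq : ((1 + θ) / 2) ^ 2 = (1 + θ) / 2 - n := by
    have hθ := h.sq
    rw [map_intCast] at hθ
    field_simp
    linear_combination hθ + hnK
  have hint : IsIntegral ℤ ((1 + θ) / 2) := by
    refine ⟨Polynomial.X ^ 2 - Polynomial.X + Polynomial.C n, by monicity!, ?_⟩
    simp only [Polynomial.eval₂_add, Polynomial.eval₂_sub, Polynomial.eval₂_pow,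
      Polynomial.eval₂_X, Polynomial.eval₂_C, hsq]
    rw [eq_intCast]
    ring
  exact ⟨⟨_, hint⟩, mul_div_cancel₀ _ two_ne_zero, RingOfIntegers.ext hsq⟩

variable [NumberField F]

theorem IsQuadratic.four_mul_selmerCard_le_of_four_mul_eq {d n : ℤ} (h : IsQuadratic F K d θ)
    (hn : 4 * n = 1 - d) (T : Finset (HeightOneSpectrum (𝓞 F)))
    (hT : ∀ v, (d : 𝓞 F) ∈ v.asIdeal → v ∈ T) {u : Fˣ} (hu : u ∈ virtualUnits 2 F)
    (hnorm : ∀ a b : F, a ^ 2 - d * b ^ 2 ≠ u) :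
    4 * selmerCard 2 K ≤ selmerCard 2 F ^ 2 * 2 ^ T.card := by
  obtain ⟨ω, hω, hωsq⟩ := h.exists_half_integer hn
  refine four_mul_selmerCard_le_of_discrim h.finrank (b := 1) (c := n) (by simpa using hωsq)
    (fun f hf => h.algebraMap_ne (2 * f - 1) ?_) T (fun v hv => hT v ?_) hu fun β => ?_
  · rw [map_sub, map_mul, map_ofNat, map_one, hf]
    linear_combination hω
  · have hnF : (4 : 𝓞 F) * n = 1 - d := mod_cast congrArg (Int.cast : ℤ → 𝓞 F) hn
    convert hv using 1
    linear_combination hnF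
  · obtain ⟨a, b, rfl⟩ := h.exists_coord β
    rw [h.norm_add_mul]
    exact hnorm a b

end HalfInteger

theorem IsQuadratic.finrank_tower {E R F : Type*} [Field E] [Field R] [Field F] [Algebra E R]
    [Algebra E F] [Algebra R F] [IsScalarTower E R F] {d : E} {e A : R} {C : F}
    (hA : IsQuadratic E R d A) (hC : IsQuadratic R F e C) : Module.finrank E F = 4 := by
  rw [← Module.finrank_mul_finrank E R F, hA.finrank, hC.finrank]

section Tower

variable {p q : ℕ} [hp : Fact p.Prime] [hq : Fact q.Prime] {R F : Type*} [Field R] [NumberField R]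
  [Field F] [Algebra R F] {A : R} {C : F}

theorem IsQuadratic.exists_ringHom_padic (hp2 : p ≠ 2) {d : ℤ} (hd : legendreSym p d = 1)
    (hA : IsQuadratic ℚ R d A) : Nonempty (R →+* ℚ_[p]) := by
  obtain ⟨w, hw⟩ := exists_padic_sqrt hp2 hd
  obtain ⟨ψ, -⟩ := hA.exists_lift (algebraMap ℚ ℚ_[p]) (by simpa using hw)
  exact ⟨ψ⟩

theorem exists_norm_sq_sub_mul_sq_eq {S : Type*} [CommRing S] {d : S} (c : S)
    (z w : QuadraticAlgebra S d 0) : ∃ x y : S,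
      QuadraticAlgebra.norm (z ^ 2 - algebraMap S _ c * w ^ 2) = x ^ 2 - c * y ^ 2 := by
  refine ⟨z.norm + c * w.norm, 2 * (z.re * w.re - d * z.im * w.im), ?_⟩
  simp [QuadraticAlgebra.norm_def, pow_two, QuadraticAlgebra.algebraMap_eq]
  ring

/- `F` embeds in the quadratic algebra `ℚ_q(√-2)`, in which norms down to `ℚ_q` of elements
`s² - q t²` have the shape `X² - q Y²`. -/
theorem sq_sub_mul_sq_ne_algebraMap (hpq : Residues p q)
    (hA : IsQuadratic ℚ R (-2 : ℤ) A) (hC : IsQuadratic R F (-p : ℤ) C) {x : R} {n : ℕ}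
    (hn : Odd n) (hx : Algebra.norm ℚ x = (p : ℚ) ^ n) (s t : F) :
    s ^ 2 - q * t ^ 2 ≠ algebraMap R F x := by
  intro heq
  obtain ⟨w, hw⟩ := exists_padic_sqrt hpq.q_ne_two hpq.q_neg_p
  let ι := algebraMap ℚ_[q] (QuadraticAlgebra ℚ_[q] (-2) 0)
  obtain ⟨φ, hφ, hφA⟩ := hA.exists_lift (ι.comp (algebraMap ℚ ℚ_[q])) (w := ⟨0, 1⟩) (by
    ext <;> simp [pow_two, ι, QuadraticAlgebra.algebraMap_eq])
  obtain ⟨ψ, hψ, -⟩ := hC.exists_lift φ (w := ι w) (by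
    rw [← map_pow, hw, map_intCast, map_intCast])
  obtain ⟨X, Y, hXY⟩ := exists_norm_sq_sub_mul_sq_eq (q : ℚ_[q]) (ψ s) (ψ t)
  obtain ⟨a, b, rfl⟩ := hA.exists_coord x
  have hψx : ψ s ^ 2 - algebraMap ℚ_[q] _ (q : ℚ_[q]) * ψ t ^ 2 = ⟨(a : ℚ_[q]), (b : ℚ_[q])⟩ := by
    rw [map_natCast, ← map_natCast ψ q, ← map_pow, ← map_pow, ← map_mul, ← map_sub, heq, hψ]
    rw [map_add, map_mul, hφ, hφ, hφA]
    ext <;> simp [ι, QuadraticAlgebra.algebraMap_eq]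
  rw [hA.norm_add_mul] at hx
  rw [hψx, QuadraticAlgebra.norm_def] at hXY
  have hx' : (a : ℚ_[q]) ^ 2 + 2 * b ^ 2 = p ^ n := by
    have := congrArg (algebraMap ℚ ℚ_[q]) hx
    simp only [map_sub, map_pow, map_mul, map_intCast, map_natCast, eq_ratCast] at this
    push_cast at this
    linear_combination this
  refine one_ne_zero (eq_zero_of_nonresidue (legendreSym_pow_of_odd hpq.q_p hn)
    (natCast_not_dvd_of_isUnit isUnit_one.neg) (x := X) (y := Y) (z := 1) ?_)
  push_cast
  linear_combination hXY - hx'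

variable [NumberField F]

theorem selmerCard_sqrt_neg_two_sqrt_neg_le (hpq : Residues p q)
    (hA : IsQuadratic ℚ R (-2 : ℤ) A) (hC : IsQuadratic R F (-p : ℤ) C) : selmerCard 2 F ≤ 4 := by
  have hR : selmerCard 2 R ≤ 2 := by
    refine (hA.selmerCard_two_le fun a b hab => ?_).trans ?_
    · push_cast at hab
      nlinarith [sq_nonneg a, sq_nonneg b]
    · rw [show 2 * (-2 : ℤ).natAbs = 2 ^ 2 by norm_num,
        Nat.primeFactors_prime_pow two_ne_zero Nat.prime_two, Finset.card_singleton, pow_one]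
  obtain ⟨n, hn⟩ : ∃ n : ℤ, 4 * n = 1 - -p := ⟨(p + 1) / 4, by have := hpq.p_mod; omega⟩
  obtain ⟨T, hT, hcard⟩ := exists_finset_forall_natCast_mem (F := R) hp.out.ne_zero
  rw [hp.out.primeFactors, Finset.card_singleton, hA.finrank] at hcard
  obtain ⟨ψ⟩ := hA.exists_ringHom_padic hpq.p_ne_two hpq.p_neg_two
  have hbound := hC.four_mul_selmerCard_le_of_four_mul_eq hn T
    (fun v hv => hT v (by simpa using hv)) neg_one_mem_virtualUnits fun a b hab => by
      have hψ := congrArg ψ hab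
      refine one_ne_zero (eq_zero_of_nonresidue hpq.p_neg_one
        (natCast_not_dvd_of_isUnit isUnit_one) (x := ψ a) (y := ψ b) (z := 1) ?_)
      simp only [map_sub, map_pow, map_mul, map_intCast, Units.val_neg, Units.val_one, map_neg,
        map_one] at hψ
      push_cast at hψ ⊢
      linear_combination -hψ
  have hT2 : 2 ^ T.card ≤ 2 ^ 2 := Nat.pow_le_pow_right two_pos hcard
  have := hbound.trans (Nat.mul_le_mul (Nat.pow_le_pow_left hR 2) hT2)
  omega

theorem exists_mem_virtualUnits_norm_eq_pow (hpq : Residues p q)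
    (hA : IsQuadratic ℚ R (-2 : ℤ) A) (hC : IsQuadratic R F (-p : ℤ) C) :
    ∃ u ∈ virtualUnits 2 F, ∃ (x : R) (n : ℕ), Odd n ∧ (u : F) = algebraMap R F x ∧
      Algebra.norm ℚ x = (p : ℚ) ^ n := by
  obtain ⟨ψ⟩ := hA.exists_ringHom_padic hpq.p_ne_two hpq.p_neg_two
  obtain ⟨I, P, hI, -, hP⟩ := exists_sq_eq_map_of_ringHom_padic hC ψ
  have hI0 := ne_bot_of_absNorm_eq hI
  obtain ⟨x, hx⟩ := exists_pow_eq_span hI0 dvd_rfl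
  have hx0 : x ≠ 0 := by
    rintro rfl
    exact pow_ne_zero _ hI0 (hx.trans Ideal.span_singleton_zero)
  have hx0' : algebraMap (𝓞 F) F (algebraMap (𝓞 R) (𝓞 F) x) ≠ 0 := by simpa using hx0
  refine ⟨_, mk0_mem_virtualUnits two_ne_zero hx0' (J := P ^ Nat.card (ClassGroup (𝓞 R))) ?_,
    x, _, odd_card_classGroup_sqrt_neg_two hA, rfl, ?_⟩
  · rw [← pow_mul, mul_comm, pow_mul, hP, ← Ideal.map_pow, hx, Ideal.map_span, Set.image_singleton]
  · rw [← Nat.cast_pow, ← hI, ← map_pow, hx, hA.absNorm_span (by norm_num)]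

end Tower

section RamifiedPrimes

variable {F : Type*} [Field F] [NumberField F]

/- `2` is the square of `(√-2)` up to a unit, and the residue fields at `2` are bigger than `𝔽₂`
because `X² - X + n` has no root there. -/
theorem exists_finset_forall_two_mem (hF : Module.finrank ℚ F = 4) {α ω : 𝓞 F} (hα : α ^ 2 = -2)
    {n : ℤ} (hn : Odd n) (hω : ω ^ 2 = ω - n) : ∃ T : Finset (HeightOneSpectrum (𝓞 F)),
    (∀ v, 2 ∈ v.asIdeal → v ∈ T) ∧ T.card ≤ 1 := by
  have hα0 : Ideal.span {α} ≠ ⊥ := by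
    rw [Ne, Ideal.span_singleton_eq_bot]
    rintro rfl
    norm_num at hα
  have hmem (v : HeightOneSpectrum (𝓞 F)) : Ideal.span {α} ≤ v.asIdeal ↔ 2 ∈ v.asIdeal := by
    rw [Ideal.span_singleton_le_iff_mem, ← neg_mem_iff (x := (2 : 𝓞 F)), ← hα,
      v.isPrime.pow_mem_iff_mem 2 two_pos]
  have hnorm : Ideal.absNorm (Ideal.span {α}) = 4 := by
    have hsq : Ideal.span {α} ^ 2 = Ideal.span {((2 : ℕ) : 𝓞 F)} := by
      rw [Ideal.span_singleton_pow, hα, Ideal.span_singleton_neg, Nat.cast_ofNat]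
    have := congrArg Ideal.absNorm hsq
    rw [map_pow, absNorm_span_natCast, hF] at this
    exact Nat.pow_left_injective two_ne_zero (this.trans (by norm_num : 2 ^ 4 = 4 ^ 2))
  obtain ⟨T, hT, hcard⟩ := exists_finset_forall_le_mem hα0 (c := 2 ^ 2) fun v hv => by
    refine sq_le_absNorm_of_no_root Nat.prime_two v.isPrime.ne_top
      (mod_cast (hmem v).mp hv) (b := 1) (by simpa using hω) fun k => ?_
    rw [one_mul, Nat.cast_ofNat, ← even_iff_two_dvd, Int.not_even_iff_odd, pow_two]
    convert (Int.even_mul_pred_self k).add_odd hn using 2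
    ring
  refine ⟨T, fun v hv => hT v ((hmem v).mpr hv), ?_⟩
  rw [hnorm, show 4 = 2 ^ 2 by norm_num, ← pow_mul] at hcard
  have := (Nat.pow_le_pow_iff_right one_lt_two).mp hcard
  omega

theorem exists_finset_forall_natCast_mem_of_nonresidue {ℓ k : ℕ} [hℓ : Fact ℓ.Prime]
    (hF : Module.finrank ℚ F = 2 * k) {d : ℤ} (hd : legendreSym ℓ d = -1) {α : 𝓞 F}
    (hα : α ^ 2 = d) : ∃ T : Finset (HeightOneSpectrum (𝓞 F)),
    (∀ v, (ℓ : 𝓞 F) ∈ v.asIdeal → v ∈ T) ∧ T.card ≤ k := by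
  obtain ⟨T, hT, hcard⟩ := exists_finset_forall_le_mem (I := Ideal.span {(ℓ : 𝓞 F)}) (c := ℓ ^ 2)
    (by simpa using hℓ.out.ne_zero) fun v hv => by
      refine sq_le_absNorm_of_no_root hℓ.out v.isPrime.ne_top
        ((Ideal.span_singleton_le_iff_mem _).mp hv) (b := 0) (c := -d) (by simpa using hα)
        fun n hn => (legendreSym.eq_neg_one_iff ℓ).mp hd ⟨n, ?_⟩
      rw [← ZMod.intCast_zmod_eq_zero_iff_dvd] at hn
      push_cast at hn
      linear_combination -hn
  refine ⟨T, fun v hv => hT v ((Ideal.span_singleton_le_iff_mem _).mpr hv), ?_⟩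
  rw [absNorm_span_natCast, hF, ← pow_mul] at hcard
  have := (Nat.pow_le_pow_iff_right hℓ.out.one_lt).mp hcard
  omega

end RamifiedPrimes

section Triquadratic

variable {p q : ℕ} [hp : Fact p.Prime] [hq : Fact q.Prime] {R F K : Type*} [Field R] [NumberField R]
  [Field F] [NumberField F] [Field K] [NumberField K] [Algebra R F] [Algebra F K] {A : R} {C : F}
  {B : K}

theorem exists_finset_forall_four_mul_mem (hpq : Residues p q)
    (hA : IsQuadratic ℚ R (-2 : ℤ) A) (hC : IsQuadratic R F (-p : ℤ) C) :
    ∃ T : Finset (HeightOneSpectrum (𝓞 F)), (∀ v, 4 * (q : 𝓞 F) ∈ v.asIdeal → v ∈ T) ∧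
      T.card ≤ 3 := by
  classical
  have hF := hA.finrank_tower hC
  obtain ⟨α, -, hα⟩ := hA.exists_intCast_sqrt
  replace hα : algebraMap (𝓞 R) (𝓞 F) α ^ 2 = (-2 : ℤ) := by rw [← map_pow, hα, map_intCast]
  obtain ⟨n, hn, hnodd⟩ : ∃ n : ℤ, 4 * n = 1 - -p ∧ Odd n :=
    ⟨(p + 1) / 4, by have := hpq.p_mod; omega, by have := hpq.p_mod; rw [Int.odd_iff]; omega⟩
  obtain ⟨ω, -, hω⟩ := hC.exists_half_integer hn
  obtain ⟨T₁, hT₁, hcard₁⟩ := exists_finset_forall_two_mem hF (by simpa using hα) hnodd hω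
  obtain ⟨T₂, hT₂, hcard₂⟩ :=
    exists_finset_forall_natCast_mem_of_nonresidue (k := 2) hF hpq.q_neg_two hα
  refine ⟨T₁ ∪ T₂, fun v hv => Finset.mem_union.mpr ?_,
    (Finset.card_union_le _ _).trans (by omega)⟩
  refine (v.isPrime.mem_or_mem hv).imp (fun h => hT₁ v (v.isPrime.mem_of_pow_mem 2 ?_)) (hT₂ v)
  rwa [show (2 : 𝓞 F) ^ 2 = 4 by norm_num]

theorem card_nthTorsion_classGroup_triquadratic (hpq : Residues p q)
    (hA : IsQuadratic ℚ R (-2 : ℤ) A) (hC : IsQuadratic R F (-p : ℤ) C)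
    (hB : IsQuadratic F K (q : ℤ) B) : Nat.card (nthTorsion 2 (ClassGroup (𝓞 K))) ≤ 2 := by
  have hrank : Units.rank K = 3 := by
    have : IsTotallyComplex K := isTotallyComplex_of_sq_eq (d := -2) (by norm_num)
      (x := algebraMap F K (algebraMap R F A)) (by simp only [← map_pow, hA.sq, map_intCast])
    have hK : Module.finrank ℚ K = 8 := by
      rw [← Module.finrank_mul_finrank ℚ F K, hA.finrank_tower hC, hB.finrank]
    have := two_mul_rank_add_one (K := K)
    omega
  obtain ⟨T, hT, hcard⟩ := exists_finset_forall_four_mul_mem hpq hA hC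
  obtain ⟨u, hu, x, n, hn, hux, hx⟩ := exists_mem_virtualUnits_norm_eq_pow hpq hA hC
  have hbound := IsQuadratic.four_mul_selmerCard_le (d := (q : 𝓞 F)) (by simpa using hB) T hT hu
    fun a b => by simpa [hux] using sq_sub_mul_sq_ne_algebraMap hpq hA hC hn hx a b
  have hF : selmerCard 2 F ^ 2 ≤ 4 ^ 2 :=
    Nat.pow_le_pow_left (selmerCard_sqrt_neg_two_sqrt_neg_le hpq hA hC) 2
  have := hbound.trans (Nat.mul_le_mul hF (Nat.pow_le_pow_right two_pos hcard))
  refine card_nthTorsion_le_of_selmerCard_le ?_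
  rw [hrank]
  omega

end Triquadratic

section CyclicSylow

variable {ℓ : ℕ} [hℓ : Fact ℓ.Prime] {G : Type*} [CommGroup G] {g : G}

theorem pow_notMem_nthPowers (hg : g ∉ nthPowers ℓ G) {n : ℕ} (hn : ¬ ℓ ∣ n) :
    g ^ n ∉ nthPowers ℓ G := by
  simp only [← QuotientGroup.eq_one_iff (N := nthPowers ℓ G)] at hg ⊢
  intro hgn
  have hgℓ : (g : G ⧸ nthPowers ℓ G) ^ ℓ = 1 :=
    (QuotientGroup.eq_one_iff _).mpr (pow_mem_nthPowers ℓ g)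
  have := pow_gcd_eq_one.mpr ⟨hgℓ, hgn⟩
  rw [(hℓ.out.coprime_iff_not_dvd.mpr hn).gcd_eq_one, pow_one] at this
  exact hg this

variable [Finite G]

theorem index_nthPowers_eq_card_nthTorsion (n : ℕ) :
    (nthPowers n G).index = Nat.card (nthTorsion n G) := by
  have hker := Subgroup.card_mul_index (nthTorsion n G)
  rw [nthTorsion, Subgroup.index_ker, mul_comm, ← Subgroup.card_mul_index (nthPowers n G)] at hker
  exact (Nat.eq_of_mul_eq_mul_left Nat.card_pos hker).symm

theorem not_dvd_index_zpowers (h : Nat.card (nthTorsion ℓ G) ≤ ℓ) (hg : g ∉ nthPowers ℓ G) :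
    ¬ ℓ ∣ (Subgroup.zpowers g).index := by
  refine not_dvd_card_of_card_nthTorsion_lt (G := G ⧸ Subgroup.zpowers g) ?_
  rw [← index_nthPowers_eq_card_nthTorsion] at h ⊢
  rw [index_nthPowers_quotient]
  refine (Subgroup.index_strictAnti (left_lt_sup.mpr fun hle => hg ?_)).trans_le h
  exact hle (Subgroup.mem_zpowers g)

theorem nonempty_sylow_mulEquiv (h : Nat.card (nthTorsion ℓ G) ≤ ℓ) (hg : g ∉ nthPowers ℓ G)
    {N n : ℕ} (hn : ¬ ℓ ∣ n) (hpow : g ^ (ℓ ^ (N + 1) * n) = 1) (hne : g ^ (ℓ ^ N * n) ≠ 1)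
    (P : Sylow ℓ G) : Nonempty (P ≃* Multiplicative (ZMod (ℓ ^ (N + 1)))) := by
  rw [mul_comm, pow_mul] at hpow hne
  have hcard : Nat.card (Subgroup.zpowers (g ^ n)) = ℓ ^ (N + 1) := by
    rw [Nat.card_zpowers, orderOf_eq_prime_pow hne hpow]
  let Q : Sylow ℓ G := (IsPGroup.of_card hcard).toSylow
    (not_dvd_index_zpowers h (pow_notMem_nthPowers hg hn))
  have := Sylow.unique_of_normal P inferInstance
  obtain rfl : P = Q := Subsingleton.elim _ _
  rw [← hcard]
  exact ⟨(zmodCyclicMulEquiv (G := Subgroup.zpowers (g ^ n)) inferInstance).symm⟩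

theorem pow_dvd_orderOf (h : Nat.card (nthTorsion ℓ G) ≤ ℓ) (hg : g ∉ nthPowers ℓ G) {m : ℕ}
    (hm : ℓ ^ m ∣ Nat.card G) : ℓ ^ m ∣ orderOf g := by
  rw [← Subgroup.card_mul_index (Subgroup.zpowers g), Nat.card_zpowers] at hm
  refine Nat.Coprime.dvd_of_dvd_mul_right (Nat.Coprime.pow_left m ?_) hm
  exact hℓ.out.coprime_iff_not_dvd.mpr (not_dvd_index_zpowers h hg)

theorem pow_eq_of_sq_eq_one (h : Nat.card (nthTorsion 2 G) ≤ 2) (hg : g ∉ nthPowers 2 G) {t : G}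
    (ht : t ≠ 1) (ht2 : t ^ 2 = 1) {M n : ℕ} (hn : Odd n) (hM : 2 ^ (M + 1) ∣ Nat.card G)
    (hcard : Nat.card G ∣ 2 ^ (M + 1) * n) : g ^ (2 ^ M * n) = t := by
  set y := g ^ (2 ^ M * n) with hy
  have hy2 : y ^ 2 = 1 := by
    rw [hy, ← pow_mul, mul_right_comm, ← pow_succ]
    exact orderOf_dvd_iff_pow_eq_one.mp ((orderOf_dvd_natCard g).trans hcard)
  have hy1 : y ≠ 1 := fun hy1 => by
    have hdvd := (pow_dvd_orderOf h hg hM).trans (orderOf_dvd_of_pow_eq_one hy1)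
    rw [pow_succ, Nat.mul_dvd_mul_iff_left (by positivity)] at hdvd
    exact Nat.not_even_iff_odd.mpr hn (even_iff_two_dvd.mpr hdvd)
  by_contra hne
  have hsub : ({1, t, y} : Set G) ⊆ nthTorsion 2 G := by
    rintro z (rfl | rfl | rfl)
    exacts [one_mem _, ht2, hy2]
  have hthree := Set.ncard_eq_three.mpr ⟨1, t, y, ht.symm, hy1.symm, Ne.symm hne, rfl⟩
  have := Set.ncard_le_ncard hsub
  change _ ≤ Nat.card (nthTorsion 2 G) at this
  omega

end CyclicSylow

section SpanTwo

variable {S : Type*} [CommRing S] {n : ℕ}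

theorem span_two_pair_sq (hn : Odd n) {δ : S} (hδ : δ ^ 2 = -2 * n) :
    Ideal.span {2, δ} ^ 2 = Ideal.span {(2 : S)} := by
  obtain ⟨k, rfl⟩ := hn
  push_cast at hδ
  apply le_antisymm
  · rw [Ideal.span_insert]
    simp only [pow_two, Ideal.mul_sup, Ideal.sup_mul, Ideal.span_singleton_mul_span_singleton,
      sup_le_iff, Ideal.span_singleton_le_iff_mem, Ideal.mem_span_singleton]
    exact ⟨⟨⟨2, rfl⟩, ⟨δ, mul_comm δ 2⟩⟩, ⟨δ, rfl⟩, ⟨-(2 * k + 1), by linear_combination hδ⟩⟩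
  · rw [Ideal.span_singleton_le_iff_mem]
    have h2 : (2 : S) ∈ Ideal.span {2, δ} := Ideal.subset_span (Set.mem_insert _ _)
    have hδ' : δ ∈ Ideal.span {2, δ} := Ideal.subset_span (Set.mem_insert_of_mem _ rfl)
    have hbezout := add_mem (Ideal.mul_mem_left _ (-k : S) (Ideal.pow_mem_pow h2 2))
      (Ideal.mul_mem_left _ (-1 : S) (Ideal.pow_mem_pow hδ' 2))
    convert hbezout using 1
    linear_combination hδ

theorem span_two_mul_eq (hn : Odd n) {α β : S} (hα : α ^ 2 = -2) (hβ : β ^ 2 = n) :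
    Ideal.span {2, α * β} = Ideal.span {α} := by
  obtain ⟨k, rfl⟩ := hn
  push_cast at hβ
  apply le_antisymm
  · rw [Ideal.span_le, Set.pair_subset_iff]
    exact ⟨Ideal.mem_span_singleton.mpr ⟨-α, by linear_combination hα⟩,
      Ideal.mem_span_singleton.mpr ⟨β, rfl⟩⟩
  · rw [Ideal.span_singleton_le_iff_mem, Ideal.mem_span_pair]
    exact ⟨-k * α, β, by linear_combination α * hβ⟩

end SpanTwo

section SpanTwoClass

variable {k : Type*} [Field k] [NumberField k]

theorem span_two_pair_mem_nonZeroDivisors (δ : 𝓞 k) : Ideal.span {2, δ} ∈ (Ideal (𝓞 k))⁰ :=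
  mem_nonZeroDivisors_of_ne_zero fun h =>
    two_ne_zero (Ideal.span_eq_bot.mp h (2 : 𝓞 k) (Set.mem_insert _ _))

theorem mk0_span_two_pair_sq {n : ℕ} (hn : Odd n) {δ : 𝓞 k} (hδ : δ ^ 2 = -2 * n)
    (hmem : Ideal.span {2, δ} ∈ (Ideal (𝓞 k))⁰) :
    ClassGroup.mk0 ⟨Ideal.span {2, δ}, hmem⟩ ^ 2 = 1 := by
  rw [← map_pow]
  exact (ClassGroup.mk0_eq_one_iff (I := Ideal.span {2, δ} ^ 2) (pow_mem hmem 2)).mpr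
    ⟨2, span_two_pair_sq hn hδ⟩

end SpanTwoClass

section NormForm

variable {ℓ : ℕ} [hℓ : Fact ℓ.Prime]

theorem not_isSquare_of_nonresidue {c : ℤ} (hc : legendreSym ℓ c = -1) : ¬ IsSquare (c : ℚ) := by
  rw [Rat.isSquare_intCast_iff]
  exact fun h => (legendreSym.eq_neg_one_iff ℓ).mp hc (h.map (Int.castRingHom (ZMod ℓ)))

variable {k : Type*} [Field k] [NumberField k] {θ : k}

theorem IsQuadratic.exists_absNorm_span_eq {d : ℤ} (h : IsQuadratic ℚ k d θ) (hd : d < 0)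
    {K : Type*} [Field K] [NumberField K] [Algebra k K] (x : 𝓞 K) :
    ∃ a b : ℚ, (Ideal.absNorm (Ideal.span {x}) : ℚ) = a ^ 2 - d * b ^ 2 := by
  obtain ⟨a, b, hab⟩ := h.exists_coord (Algebra.norm k (x : K))
  refine ⟨a, b, ?_⟩
  rw [absNorm_span_eq_abs_norm, ← Algebra.norm_norm (S := k), ← hab,
    abs_of_nonneg (h.norm_nonneg hd _), h.norm_add_mul]

theorem IsQuadratic.eq_zero_of_mul_absNorm_span_eq {e : ℤ} (h : IsQuadratic ℚ k (e * ℓ : ℤ) θ)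
    (he : e < 0) (hdvd : ¬ (ℓ : ℤ) ∣ e) {c : ℕ} (hc : legendreSym ℓ c = -1)
    {K : Type*} [Field K] [NumberField K] [Algebra k K] {x y : 𝓞 K} {j : ℕ}
    (hxy : c * Ideal.absNorm (Ideal.span {y}) = Ideal.absNorm (Ideal.span {x}) * j ^ 2) :
    y = 0 := by
  have hd : e * ℓ < 0 := mul_neg_of_neg_of_pos he (mod_cast hℓ.out.pos)
  obtain ⟨a, b, hx⟩ := h.exists_absNorm_span_eq hd x
  obtain ⟨a', b', hy⟩ := h.exists_absNorm_span_eq hd y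
  have hxy' : (c : ℚ) * Ideal.absNorm (Ideal.span {y}) =
    Ideal.absNorm (Ideal.span {x}) * j ^ 2 := mod_cast hxy
  rw [hx, hy] at hxy'
  have hzero := eq_zero_of_nonresidue_rat hc (by rwa [dvd_neg] : ¬ (ℓ : ℤ) ∣ -e)
    (z := a' ^ 2 - (e * ℓ : ℤ) * b' ^ 2) (x := j * (a * a' - e * ℓ * b * b'))
    (y := j * (a * b' - b * a')) (by
      push_cast at hxy' ⊢
      linear_combination (a' ^ 2 - e * ℓ * b' ^ 2) * hxy')
  rwa [← hy, Nat.cast_eq_zero, Ideal.absNorm_eq_zero_iff, Ideal.span_singleton_eq_bot] at hzero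

theorem IsQuadratic.mk0_notMem_nthPowers {e : ℤ} (h : IsQuadratic ℚ k (e * ℓ : ℤ) θ) (he : e < 0)
    (hdvd : ¬ (ℓ : ℤ) ∣ e) {K : Type*} [Field K] [NumberField K] [Algebra k K]
    {P : (Ideal (𝓞 K))⁰} (hP : legendreSym ℓ (Ideal.absNorm (P : Ideal (𝓞 K))) = -1) :
    ClassGroup.mk0 P ∉ nthPowers 2 (ClassGroup (𝓞 K)) := by
  rw [mem_nthPowers]
  rintro ⟨c, hc⟩
  obtain ⟨J, rfl⟩ := ClassGroup.mk0_surjective c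
  rw [← map_pow, ClassGroup.mk0_eq_mk0_iff] at hc
  obtain ⟨x, y, -, hy, hxy⟩ := hc
  refine hy (h.eq_zero_of_mul_absNorm_span_eq he hdvd hP (x := x)
    (j := Ideal.absNorm (J : Ideal (𝓞 K))) ?_)
  simpa only [map_mul, map_pow, SubmonoidClass.coe_pow, mul_comm] using
    (congrArg Ideal.absNorm hxy).symm

theorem IsQuadratic.exists_eq_unit_sq_or_neg {d : ℤ} (h : IsQuadratic ℚ k d θ) (hd : d < 0)
    (hd' : ¬ IsSquare (-d : ℚ)) (u : (𝓞 k)ˣ) : ∃ z : (𝓞 k)ˣ, u = z ^ 2 ∨ u = -z ^ 2 := by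
  have hindex : (nthPowers 2 (𝓞 k)ˣ).index = 2 := by
    rw [index_nthPowers_units two_ne_zero, h.rank_eq_zero hd,
      Nat.gcd_eq_right (Units.even_torsionOrder k).two_dvd, pow_zero, one_mul]
  have hneg : (-1 : (𝓞 k)ˣ) ∉ nthPowers 2 (𝓞 k)ˣ := by
    rw [mem_nthPowers]
    rintro ⟨y, hy⟩
    have hy' : IsSquare (algebraMap ℚ k (-1)) := by
      refine ⟨((y : 𝓞 k) : k), ?_⟩
      have := congrArg (fun v : (𝓞 k)ˣ => ((v : 𝓞 k) : k)) hy
      simpa [pow_two] using this.symm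
    rcases h.isSquare_or_isSquare_mul hy' with hsq | hsq
    · exact absurd hsq.nonneg (by norm_num)
    · exact hd' (by simpa using hsq)
  by_cases hu : u ∈ nthPowers 2 (𝓞 k)ˣ
  · exact hu.imp fun z hz => Or.inl hz.symm
  · have hmul := (Subgroup.mul_mem_iff_of_index_two hindex (a := -1) (b := u)).mpr
      (iff_of_false hneg hu)
    exact hmul.imp fun z hz => Or.inr (neg_eq_iff_eq_neg.mp (by simpa using hz.symm))

theorem IsQuadratic.exists_eq_sq_or_eq_neg_sq {d : ℤ} (h : IsQuadratic ℚ k d θ) (hd : d < 0)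
    (hd' : ¬ IsSquare (-d : ℚ)) {x y : 𝓞 k} (hxy : Ideal.span {x} = Ideal.span {y} ^ 2) :
    ∃ z, Ideal.span {z} = Ideal.span {y} ∧ (x = z ^ 2 ∨ x = -z ^ 2) := by
  rw [Ideal.span_singleton_pow, Ideal.span_singleton_eq_span_singleton] at hxy
  obtain ⟨u, rfl⟩ := hxy.symm
  obtain ⟨z, rfl | rfl⟩ := h.exists_eq_unit_sq_or_neg hd hd' u <;>
    refine ⟨y * z, Ideal.span_singleton_mul_right_unit z.isUnit y, ?_⟩
  · exact Or.inl (by rw [mul_pow, Units.val_pow_eq_pow_val])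
  · exact Or.inr (by rw [mul_pow, Units.val_neg, Units.val_pow_eq_pow_val, mul_neg])

end NormForm

section ImaginaryQuadratic

variable {p q : ℕ} [hp : Fact p.Prime] [hq : Fact q.Prime] {k : Type*} [Field k] [NumberField k]
  {D : k} {δ : 𝓞 k}

theorem Residues.not_isSquare_two (hpq : Residues p q) : ¬ IsSquare (2 : ℚ) :=
  mod_cast not_isSquare_of_nonresidue hpq.p_two

theorem Residues.not_isSquare_two_mul (hpq : Residues p q) : ¬ IsSquare (2 * q : ℚ) := by
  have hp2q : legendreSym p (2 * q) = -1 := by rw [legendreSym.mul, hpq.p_two, hpq.p_q, mul_one]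
  exact mod_cast not_isSquare_of_nonresidue hp2q

theorem Residues.odd_q (hpq : Residues p q) : Odd q := hq.out.odd_of_ne_two hpq.q_ne_two

theorem Residues.q_not_dvd_two (hpq : Residues p q) : ¬ (q : ℤ) ∣ 2 :=
  not_dvd_of_legendreSym_ne_zero (by rw [hpq.q_two]; exact one_ne_zero)

theorem neg_two_mul_natCast_neg : (-2 * q : ℤ) < 0 := by
  have := hq.out.pos
  omega

theorem span_two_pair_ne_span (hpq : Residues p q) (hD : IsQuadratic ℚ k (-2 * q : ℤ) D)
    (hδ : δ ^ 2 = -2 * q) (w : 𝓞 k) : Ideal.span {2, δ} ≠ Ideal.span {w} := by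
  intro h
  have hsq := span_two_pair_sq hpq.odd_q hδ
  rw [h] at hsq
  obtain ⟨z, -, hz⟩ := hD.exists_eq_sq_or_eq_neg_sq neg_two_mul_natCast_neg
    (by simpa using hpq.not_isSquare_two_mul) hsq.symm
  have hq0 : (0 : ℚ) < q := mod_cast hq.out.pos
  rcases hz with hz | hz
  · have hz' : IsSquare (algebraMap ℚ k 2) := by
      refine ⟨z, ?_⟩
      have := congrArg (algebraMap (𝓞 k) k) hz
      simp only [map_pow, map_ofNat] at this ⊢
      rw [this, pow_two]
    rcases hD.isSquare_or_isSquare_mul hz' with h2 | h2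
    · exact hpq.not_isSquare_two h2
    · exact h2.nonneg.not_gt (by push_cast; linarith)
  · have hz' : IsSquare (algebraMap ℚ k (-2)) := by
      refine ⟨z, ?_⟩
      have := congrArg (algebraMap (𝓞 k) k) hz
      simp only [map_neg, map_pow, map_ofNat] at this ⊢
      rw [this, neg_neg, pow_two]
    rcases hD.isSquare_or_isSquare_mul hz' with h2 | ⟨x, hx⟩
    · exact h2.nonneg.not_gt (by norm_num)
    · refine hq.out.prime.not_isSquare (Rat.isSquare_natCast_iff.mp ⟨x / 2, ?_⟩)
      push_cast at hx
      linear_combination hx / 4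

theorem mk0_span_two_pair_ne_one (hpq : Residues p q) (hD : IsQuadratic ℚ k (-2 * q : ℤ) D)
    (hδ : δ ^ 2 = -2 * q) (hmem : Ideal.span {2, δ} ∈ (Ideal (𝓞 k))⁰) :
    ClassGroup.mk0 ⟨Ideal.span {2, δ}, hmem⟩ ≠ 1 := fun h => by
  obtain ⟨w, hw⟩ := (ClassGroup.mk0_eq_one_iff hmem).mp h
  exact span_two_pair_ne_span hpq hD hδ w hw

theorem two_dvd_card_classGroup (hpq : Residues p q) (hD : IsQuadratic ℚ k (-2 * q : ℤ) D)
    (hδ : δ ^ 2 = -2 * q) : 2 ∣ Nat.card (ClassGroup (𝓞 k)) := by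
  have hmem := span_two_pair_mem_nonZeroDivisors δ
  rw [← orderOf_eq_prime (mk0_span_two_pair_sq hpq.odd_q hδ hmem)
    (mk0_span_two_pair_ne_one hpq hD hδ hmem)]
  exact orderOf_dvd_natCard _

theorem Residues.mk0_notMem_nthPowers (hpq : Residues p q)
    (hD : IsQuadratic ℚ k (-2 * q : ℤ) D) {K : Type*} [Field K] [NumberField K] [Algebra k K]
    {P : (Ideal (𝓞 K))⁰} (hP : Ideal.absNorm (P : Ideal (𝓞 K)) = p) :
    ClassGroup.mk0 P ∉ nthPowers 2 (ClassGroup (𝓞 K)) :=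
  hD.mk0_notMem_nthPowers (by norm_num) (by rw [dvd_neg]; exact hpq.q_not_dvd_two)
    (hP ▸ hpq.q_p)

theorem exists_pow_mul_span_two_pair_eq_span (hpq : Residues p q)
    (hD : IsQuadratic ℚ k (-2 * q : ℤ) D) (hδ : δ ^ 2 = -2 * q) {I : Ideal (𝓞 k)}
    (hI : Ideal.absNorm I = p) {M n : ℕ} (hn : Odd n)
    (hM : 2 ^ (M + 1) ∣ Nat.card (ClassGroup (𝓞 k)))
    (hcard : Nat.card (ClassGroup (𝓞 k)) ∣ 2 ^ (M + 1) * n) :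
    ∃ w, I ^ (2 ^ M * n) * Ideal.span {2, δ} = Ideal.span {w} := by
  have hmem := span_two_pair_mem_nonZeroDivisors δ
  have hI0 : I ∈ (Ideal (𝓞 k))⁰ := mem_nonZeroDivisors_of_ne_zero (ne_bot_of_absNorm_eq hI)
  have hsq := mk0_span_two_pair_sq hpq.odd_q hδ hmem
  have hpow := pow_eq_of_sq_eq_one (card_nthTorsion_classGroup_sqrt_neg_two_mul_le hD)
    (hpq.mk0_notMem_nthPowers hD (P := ⟨I, hI0⟩) hI) (mk0_span_two_pair_ne_one hpq hD hδ hmem)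
    hsq hn hM hcard
  have hone : ClassGroup.mk0 (⟨I, hI0⟩ ^ (2 ^ M * n) * ⟨Ideal.span {2, δ}, hmem⟩) = 1 := by
    rw [map_mul, map_pow, hpow, ← pow_two, hsq]
  exact ((ClassGroup.mk0_eq_one_iff (I := I ^ (2 ^ M * n) * Ideal.span {2, δ})
    (mul_mem (pow_mem hI0 _) hmem)).mp hone).principal

theorem even_of_pow_mul_span_two_pair_eq_span (hpq : Residues p q)
    (hD : IsQuadratic ℚ k (-2 * q : ℤ) D) (hδ : δ ^ 2 = -2 * q) {I : Ideal (𝓞 k)}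
    (hI : Ideal.absNorm I = p) {n : ℕ} {w : 𝓞 k}
    (hw : I ^ n * Ideal.span {2, δ} = Ideal.span {w}) : Even n := by
  by_contra hn
  rw [Nat.not_even_iff_odd] at hn
  have htwo : Ideal.absNorm (Ideal.span {2, δ}) = 2 := by
    have := congrArg Ideal.absNorm (span_two_pair_sq hpq.odd_q hδ)
    rw [map_pow, ← Nat.cast_two, absNorm_span_natCast, hD.finrank] at this
    exact Nat.pow_left_injective two_ne_zero this
  have hc : legendreSym q ((p ^ n * 2 : ℕ) : ℤ) = -1 := by
    push_cast
    rw [legendreSym.mul, legendreSym_pow_of_odd hpq.q_p hn, hpq.q_two, mul_one]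
  refine one_ne_zero (hD.eq_zero_of_mul_absNorm_span_eq (by norm_num)
    (by rw [dvd_neg]; exact hpq.q_not_dvd_two) hc (x := w) (y := 1) (j := 1) ?_)
  rw [← hw, map_mul, map_pow, hI, htwo, Ideal.span_singleton_one, Ideal.absNorm_top, mul_one,
    one_pow, mul_one]

end ImaginaryQuadratic

/-- `L` is the compositum of the quadratic fields `R = ℚ(√d)` and `E = ℚ(√e)`, with third quadratic
subfield `k = ℚ(√(de))`; the square roots `A`, `B`, `D` are chosen so that `D = A * B` in `L`. -/
structure IsBiquadratic (d e : ℤ) {R k E L : Type*} [Field R] [Field k] [Field E] [Field L]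
    [NumberField R] [NumberField k] [NumberField E] [NumberField L]
    [Algebra R L] [Algebra k L] [Algebra E L] (A : R) (D : k) (B : E) : Prop where
  left : IsQuadratic ℚ R d A
  middle : IsQuadratic ℚ k (d * e : ℤ) D
  right : IsQuadratic ℚ E e B
  over_left : IsQuadratic R L e (algebraMap E L B)
  over_middle : IsQuadratic k L d (algebraMap R L A)
  over_right : IsQuadratic E L d (algebraMap R L A)
  mul_eq : algebraMap k L D = algebraMap R L A * algebraMap E L B

theorem exists_eq_span_of_mul_eq {S : Type*} [CommRing S] [IsDomain S] {J : Ideal S} {b x : S}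
    (hb : b ≠ 0) (h : Ideal.span {b} * J = Ideal.span {x}) : ∃ y, J = Ideal.span {y} := by
  have hx : x ∈ Ideal.span {b} := by
    refine Ideal.mul_le_left (J := J) ?_
    rw [h]
    exact Ideal.mem_span_singleton_self x
  obtain ⟨y, rfl⟩ := Ideal.mem_span_singleton.mp hx
  rw [← Ideal.span_singleton_mul_span_singleton, Ideal.span_singleton_mul_right_inj hb] at h
  exact ⟨y, h⟩

theorem exists_pow_two_mul_eq_span_of_mul {S : Type*} [CommRing S] [IsDomain S]
    {I I₁ I₂ : Ideal S} {n : ℕ} {a b w t : S} (hb : b ≠ 0) (ht : t ≠ 0)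
    (h₁ : (I * I₁) ^ n = Ideal.span {a}) (h₂ : (I * I₂) ^ n * Ideal.span {t} = Ideal.span {w})
    (h₁₂ : (I₁ * I₂) ^ n = Ideal.span {b}) : ∃ x, I ^ (2 * n) = Ideal.span {x} := by
  refine exists_eq_span_of_mul_eq (mul_ne_zero hb ht) (x := a * w) ?_
  rw [← Ideal.span_singleton_mul_span_singleton, ← Ideal.span_singleton_mul_span_singleton,
    ← h₁, ← h₂, ← h₁₂]
  ring

namespace IsBiquadratic

variable {d e : ℤ} {R k E L : Type*} [Field R] [Field k] [Field E] [Field L]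
  [NumberField R] [NumberField k] [NumberField E] [NumberField L]
  [Algebra R L] [Algebra k L] [Algebra E L] {A : R} {D : k} {B : E}

theorem ringHom_ext (h : IsBiquadratic d e A D B (L := L)) {f g : L →+* L}
    (hA : f (algebraMap R L A) = g (algebraMap R L A))
    (hB : f (algebraMap E L B) = g (algebraMap E L B)) : f = g := by
  ext x
  obtain ⟨a, b, rfl⟩ := h.over_left.exists_coord x
  obtain ⟨a₁, a₂, rfl⟩ := h.left.exists_coord a
  obtain ⟨b₁, b₂, rfl⟩ := h.left.exists_coord b
  simp only [map_add, map_mul, eq_ratCast, map_ratCast, hA, hB]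

theorem exists_conj (h : IsBiquadratic d e A D B (L := L)) : ∃ s τ τ' : L →+* L,
    (∀ x, s (algebraMap k L x) = algebraMap k L x) ∧ s (algebraMap R L A) = -algebraMap R L A ∧
    s (algebraMap E L B) = -algebraMap E L B ∧
    (∀ x, x * s x = algebraMap k L (Algebra.norm k x)) ∧
    (∀ x, x * τ x = algebraMap R L (Algebra.norm R x)) ∧
    (∀ x, x * τ' x = algebraMap E L (Algebra.norm E x)) ∧ τ'.comp τ = s := by
  obtain ⟨s, hsk, hsA, hs⟩ := h.over_middle.exists_conj
  obtain ⟨τ, hτR, hτB, hτ⟩ := h.over_left.exists_conj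
  obtain ⟨τ', hτE, hτA, hτ'⟩ := h.over_right.exists_conj
  have hA0 : algebraMap R L A ≠ 0 := fun h0 =>
    h.over_middle.algebraMap_ne 0 (by rw [map_zero, h0])
  have hsB : s (algebraMap E L B) = -algebraMap E L B := by
    have hD := hsk D
    rw [h.mul_eq, map_mul, hsA] at hD
    exact mul_left_cancel₀ hA0 (by linear_combination -hD)
  refine ⟨s, τ, τ', hsk, hsA, hsB, hs, hτ, hτ', h.ringHom_ext ?_ ?_⟩
  · rw [RingHom.comp_apply, hτR, hτA, hsA]
  · rw [RingHom.comp_apply, hτB, map_neg, hτE, hsB]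

theorem exists_pow_two_mul_eq_span (h : IsBiquadratic d e A D B (L := L)) {I : Ideal (𝓞 L)}
    (hI : I ≠ ⊥) {n : ℕ} (hR : Nat.card (ClassGroup (𝓞 R)) ∣ n)
    (hE : Nat.card (ClassGroup (𝓞 E)) ∣ n) {T : Ideal (𝓞 k)} {t : 𝓞 L} (ht : t ≠ 0)
    (hT : T.map (algebraMap (𝓞 k) (𝓞 L)) = Ideal.span {t}) {w : 𝓞 k}
    (hw : Ideal.relNorm (𝓞 k) I ^ n * T = Ideal.span {w}) : ∃ x, I ^ (2 * n) = Ideal.span {x} := by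
  obtain ⟨s, τ, τ', -, -, -, hs, hτ, hτ', rfl⟩ := h.exists_conj
  have hJ : I.map (RingOfIntegers.mapRingHom τ) ≠ ⊥ := by
    rwa [Ne, Ideal.map_eq_bot_iff_of_injective fun x y hxy => RingOfIntegers.ext
      (τ.injective (congrArg (algebraMap (𝓞 L) L) hxy))]
  have hNJ : Ideal.relNorm (𝓞 E) (I.map (RingOfIntegers.mapRingHom τ)) ≠ ⊥ :=
    Ideal.relNorm_eq_bot_iff.not.mpr hJ
  obtain ⟨a, ha⟩ := exists_pow_eq_span (Ideal.relNorm_eq_bot_iff.not.mpr hI) hR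
  obtain ⟨b, hb⟩ := exists_pow_eq_span hNJ hE
  have hb0 : b ≠ 0 := Ideal.span_singleton_eq_bot.not.mp (hb ▸ pow_ne_zero n hNJ)
  refine exists_pow_two_mul_eq_span_of_mul (b := algebraMap (𝓞 E) (𝓞 L) b)
    ((map_ne_zero_iff _ (FaithfulSMul.algebraMap_injective (𝓞 E) (𝓞 L))).mpr hb0) ht
    (I₁ := I.map (RingOfIntegers.mapRingHom τ))
    (I₂ := I.map (RingOfIntegers.mapRingHom (τ'.comp τ))) (a := algebraMap (𝓞 R) (𝓞 L) a)
    (w := algebraMap (𝓞 k) (𝓞 L) w) ?_ ?_ ?_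
  · rw [mul_map_conj_eq_map_relNorm hτ hI, ← Ideal.map_pow, ha, Ideal.map_span,
      Set.image_singleton]
  · rw [mul_map_conj_eq_map_relNorm hs hI, ← hT, ← Ideal.map_pow, ← Ideal.map_mul, hw,
      Ideal.map_span, Set.image_singleton]
  · have hcomp : I.map (RingOfIntegers.mapRingHom (τ'.comp τ)) =
        (I.map (RingOfIntegers.mapRingHom τ)).map (RingOfIntegers.mapRingHom τ') := by
      rw [Ideal.map_map]
      rfl
    rw [hcomp, mul_map_conj_eq_map_relNorm hτ' hJ, ← Ideal.map_pow, hb, Ideal.map_span,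
      Set.image_singleton]

theorem exists_map_span_two_pair_eq_span {n : ℕ} (hn : Odd n)
    (h : IsBiquadratic (-2) n A D B (L := L)) {δ : 𝓞 k} (hδ : (δ : k) = D) :
    ∃ t : 𝓞 L, t ≠ 0 ∧ (Ideal.span {2, δ}).map (algebraMap (𝓞 k) (𝓞 L)) = Ideal.span {t} := by
  obtain ⟨α, hα, hα2⟩ := h.over_middle.exists_intCast_sqrt
  obtain ⟨β, hβ, hβ2⟩ := h.over_left.exists_intCast_sqrt
  push_cast at hα2 hβ2
  have hαβ : algebraMap (𝓞 k) (𝓞 L) δ = α * β := by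
    apply RingOfIntegers.ext
    change algebraMap k L (δ : k) = (α : L) * β
    rw [hδ, hα, hβ, h.mul_eq]
  refine ⟨α, ?_, ?_⟩
  · rintro rfl
    simp at hα2
  · rw [Ideal.map_span, Set.image_pair, map_ofNat, hαβ, span_two_mul_eq hn hα2 hβ2]

end IsBiquadratic

theorem IsQuadratic.norm_ne_mul_sq {q : ℕ} [Fact q.Prime] {E : Type*} [Field E] [NumberField E]
    {B : E} (hB : IsQuadratic ℚ E (q : ℤ) B) {a : ℤ} (ha : legendreSym q a = -1) {c : ℚ}
    (hc : c ≠ 0) (x : E) : Algebra.norm ℚ x ≠ a * c ^ 2 := by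
  obtain ⟨u, v, rfl⟩ := hB.exists_coord x
  rw [hB.norm_add_mul]
  intro h
  refine hc (eq_zero_of_nonresidue_rat ha (natCast_not_dvd_of_isUnit isUnit_neg_one)
    (x := u) (y := v) ?_)
  push_cast at h ⊢
  linear_combination -h

theorem IsQuadratic.mul_conj_eq_norm {K L : Type*} [Field K] [NumberField K] [Field L]
    [NumberField L] [Algebra K L] {d : ℚ} {θ : K} (h : IsQuadratic ℚ K d θ) {s : L →+* L}
    (hs : s (algebraMap K L θ) = -algebraMap K L θ) (x : K) :
    algebraMap K L x * s (algebraMap K L x) = algebraMap ℚ L (Algebra.norm ℚ x) := by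
  obtain ⟨a, b, rfl⟩ := h.exists_coord x
  have hsq := congrArg (algebraMap K L) h.sq
  simp only [map_pow, eq_ratCast, map_ratCast] at hsq
  rw [h.norm_add_mul]
  simp only [map_add, map_mul, map_sub, map_pow, hs, eq_ratCast, map_ratCast]
  linear_combination -(b : L) ^ 2 * hsq

/- By Brahmagupta's identity the product is again a value of `X² + pY²`, and such a value is never
twice a nonzero square in `ℚ_p`, because `2` is a nonresidue modulo `p`. -/
theorem eq_zero_of_two_mul_mul_eq_sq {p : ℕ} [Fact p.Prime] (hp : legendreSym p 2 = -1)
    {L : Type*} [Field L] (ψ : L →+* ℚ_[p]) {a b c d w : L}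
    (h : 2 * ((a ^ 2 + p * b ^ 2) * (c ^ 2 + p * d ^ 2)) = w ^ 2) : w = 0 := by
  have hψ := congrArg ψ h
  simp only [map_mul, map_add, map_pow, map_natCast, map_ofNat] at hψ
  have hzero := eq_zero_of_nonresidue hp (natCast_not_dvd_of_isUnit isUnit_one)
    (z := ψ w / 2) (x := ψ a * ψ c - p * ψ b * ψ d) (y := ψ a * ψ d + ψ b * ψ c)
    (by push_cast; linear_combination -hψ / 2)
  simpa using hzero

namespace IsBiquadratic

variable {p q : ℕ} [Fact p.Prime] [Fact q.Prime] {R k E L : Type*} [Field R] [Field k] [Field E]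
  [Field L] [NumberField R] [NumberField k] [NumberField E] [NumberField L]
  [Algebra R L] [Algebra k L] [Algebra E L] {A : R} {D : k} {B : E}

theorem nonempty_ringHom_padic (hpq : Residues p q) (h : IsBiquadratic (-2) q A D B (L := L)) :
    Nonempty (L →+* ℚ_[p]) := by
  obtain ⟨φ⟩ := h.left.exists_ringHom_padic hpq.p_ne_two hpq.p_neg_two
  obtain ⟨t, ht⟩ := exists_padic_sqrt hpq.p_ne_two hpq.p_q
  obtain ⟨ψ, -⟩ := h.over_left.exists_lift φ (by simpa using ht)
  exact ⟨ψ⟩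

theorem mul_conj_ne (hpq : Residues p q) (h : IsBiquadratic (-2) q A D B (L := L)) {s : L →+* L}
    (hsA : s (algebraMap R L A) = -algebraMap R L A)
    (hsB : s (algebraMap E L B) = -algebraMap E L B) {y : L} {f : E}
    (hy : y ^ 2 = algebraMap E L f) {c : ℚ} (hc : c ≠ 0) :
    y * s y ≠ algebraMap ℚ L (-2 * c ^ 2) := by
  intro hys
  have hnorm {z : L} {g : E} (hz : z ^ 2 = algebraMap E L g ^ 2) :
      z * s z = algebraMap ℚ L (Algebra.norm ℚ g) := by
    rw [← h.right.mul_conj_eq_norm hsB]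
    rcases sq_eq_sq_iff_eq_or_eq_neg.mp hz with rfl | rfl
    · rfl
    · rw [map_neg, neg_mul_neg]
  rcases h.over_right.isSquare_or_isSquare_mul ⟨y, by rw [← hy, pow_two]⟩ with ⟨g, hg⟩ | ⟨g, hg⟩
  · have hnorm_g := hnorm (z := y) (g := g) (by rw [hy, hg, map_mul, pow_two])
    exact h.right.norm_ne_mul_sq hpq.q_neg_two hc g (by
      exact_mod_cast (algebraMap ℚ L).injective (hnorm_g.symm.trans hys))
  · have hA := h.over_middle.sq
    have hnorm_g := hnorm (z := y * algebraMap R L A) (g := g) (by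
      rw [mul_pow, hy, h.over_right.sq, ← map_mul, hg, map_mul, pow_two])
    refine h.right.norm_ne_mul_sq hpq.q_neg_one (c := 2 * c) (by simpa using hc) g
      ((algebraMap ℚ L).injective ?_)
    rw [← hnorm_g, map_mul, hsA]
    simp only [map_mul, map_pow, map_neg, map_ofNat, Int.cast_neg, Int.cast_ofNat, Int.cast_one,
      map_one] at hA hys ⊢
    linear_combination 2 * hys - y * s y * hA

/- If `β * s β = -w² / 2` and `β * τ β = ±x²` then `y = w * x / β` has square in `E` and
`y * s y = -2 * (x * s x)`. -/
theorem false_of_mul_conj_eq (hpq : Residues p q) (h : IsBiquadratic (-2) q A D B (L := L))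
    {s τ τ' : L →+* L} (hsA : s (algebraMap R L A) = -algebraMap R L A)
    (hsB : s (algebraMap E L B) = -algebraMap E L B)
    (hτ' : ∀ x, x * τ' x = algebraMap E L (Algebra.norm E x)) (hcomp : τ'.comp τ = s)
    {β w x : L} (hβ : β ≠ 0) (hsw : s w = w) (hw : 2 * (β * s β) = -w ^ 2)
    (hx : β * τ β = x ^ 2 ∨ β * τ β = -x ^ 2) {c : ℚ} (hc : c ≠ 0)
    (hxs : x * s x = algebraMap ℚ L (c ^ 2)) : False := by
  have hsβ : s β ≠ 0 := (map_ne_zero s).mpr hβ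
  obtain ⟨ε, hε, hεx⟩ : ∃ ε : E, ε ^ 2 = 1 ∧ β * τ β = algebraMap E L ε * x ^ 2 := by
    rcases hx with hx | hx
    · exact ⟨1, by norm_num, by rw [hx, map_one, one_mul]⟩
    · exact ⟨-1, by norm_num, by rw [hx, map_neg, map_one, neg_one_mul]⟩
  have hε' : algebraMap E L ε ^ 2 = 1 := by rw [← map_pow, hε, map_one]
  refine h.mul_conj_ne hpq hsA hsB (y := w * x / β) (f := -2 * ε * Algebra.norm E (τ β)) ?_ hc ?_
  · rw [map_mul, ← hτ', ← RingHom.comp_apply, hcomp, div_pow, div_eq_iff (pow_ne_zero 2 hβ)]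
    simp only [map_mul, map_neg, map_ofNat]
    linear_combination x ^ 2 * hw + 2 * algebraMap E L ε * β * s β * hεx +
      2 * β * s β * x ^ 2 * hε'
  · rw [map_div₀, map_mul, hsw, div_mul_div_comm, div_eq_iff (mul_ne_zero hβ hsβ), map_mul, ← hxs]
    simp only [map_neg, map_ofNat]
    linear_combination (x * s x) * hw

theorem exists_two_mul_mul_conj_eq (hpq : Residues p q)
    (h : IsBiquadratic (-2) q A D B (L := L)) {s : L →+* L}
    (hs : ∀ x, x * s x = algebraMap k L (Algebra.norm k x)) {I : Ideal (𝓞 L)} {n : ℕ}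
    {T : Ideal (𝓞 k)} (hT : T ^ 2 = Ideal.span {2}) {w : 𝓞 k}
    (hw : Ideal.relNorm (𝓞 k) I ^ n * T = Ideal.span {w}) {β : 𝓞 L}
    (hβ : I ^ (2 * n) = Ideal.span {β}) :
    ∃ y : k, 2 * (β * s β) = algebraMap k L y ^ 2 ∨ 2 * (β * s β) = -algebraMap k L y ^ 2 := by
  have hspan : Ideal.span {2 * Algebra.intNorm (𝓞 k) (𝓞 L) β} = Ideal.span {w} ^ 2 := by
    rw [← hw, mul_pow, hT, ← pow_mul, mul_comm n, ← map_pow, hβ, Ideal.relNorm_singleton,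
      Ideal.span_singleton_mul_span_singleton, mul_comm]
  obtain ⟨y, -, hy⟩ := h.middle.exists_eq_sq_or_eq_neg_sq neg_two_mul_natCast_neg
    (by simpa using hpq.not_isSquare_two_mul) hspan
  refine ⟨y, hy.imp (fun hy => ?_) fun hy => ?_⟩ <;>
    simpa only [mul_conj_eq_intNorm hs, map_mul, map_neg, map_pow, map_ofNat] using
      congrArg (fun z : 𝓞 k => algebraMap k L z) hy

theorem exists_mul_conj_eq (hpq : Residues p q)
    (h : IsBiquadratic (-2) q A D B (L := L)) {τ : L →+* L}
    (hτ : ∀ x, x * τ x = algebraMap R L (Algebra.norm R x)) {I : Ideal (𝓞 L)}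
    (hI : Ideal.absNorm I = p) {n : ℕ} (hn : Nat.card (ClassGroup (𝓞 R)) ∣ n) {β : 𝓞 L}
    (hβ : I ^ (2 * n) = Ideal.span {β}) : ∃ x : R, Algebra.norm ℚ x = (p : ℚ) ^ n ∧
      (β * τ β = algebraMap R L x ^ 2 ∨ β * τ β = -algebraMap R L x ^ 2) := by
  obtain ⟨a, ha⟩ :=
    exists_pow_eq_span (Ideal.relNorm_eq_bot_iff.not.mpr (ne_bot_of_absNorm_eq hI)) hn
  have hspan : Ideal.span {Algebra.intNorm (𝓞 R) (𝓞 L) β} = Ideal.span {a} ^ 2 := by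
    rw [← ha, ← pow_mul, mul_comm n, ← map_pow, hβ, Ideal.relNorm_singleton]
  obtain ⟨x, hx, hxβ⟩ := h.left.exists_eq_sq_or_eq_neg_sq (by norm_num)
    (by simpa using hpq.not_isSquare_two) hspan
  refine ⟨x, ?_, hxβ.imp (fun hx => ?_) fun hx => ?_⟩
  · rw [← h.left.absNorm_span (by norm_num), hx, ← ha, map_pow, Ideal.absNorm_relNorm, hI,
      Nat.cast_pow]
  all_goals simpa only [mul_conj_eq_intNorm hτ, map_neg, map_pow] using
    congrArg (fun z : 𝓞 R => algebraMap R L z) hx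

theorem pow_four_mul_ne_span (hpq : Residues p q) (h : IsBiquadratic (-2) q A D B (L := L))
    {I : Ideal (𝓞 L)} (hI : Ideal.absNorm I = p) {j : ℕ}
    (hR : Nat.card (ClassGroup (𝓞 R)) ∣ 2 * j) {T : Ideal (𝓞 k)} (hT : T ^ 2 = Ideal.span {2})
    {w : 𝓞 k} (hw : Ideal.relNorm (𝓞 k) I ^ (2 * j) * T = Ideal.span {w}) {β : 𝓞 L} {a c : L}
    (hac : (β : L) = a ^ 2 + p * c ^ 2) : I ^ (2 * (2 * j)) ≠ Ideal.span {β} := by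
  intro hβ
  obtain ⟨ψ⟩ := h.nonempty_ringHom_padic hpq
  obtain ⟨s, τ, τ', hsk, hsA, hsB, hs, hτ, hτ', hcomp⟩ := h.exists_conj
  have hβ0 : (β : L) ≠ 0 := by
    rw [RingOfIntegers.coe_ne_zero_iff, Ne, ← Ideal.span_singleton_eq_bot, ← hβ]
    exact pow_ne_zero _ (ne_bot_of_absNorm_eq hI)
  obtain ⟨y, hy | hy⟩ := h.exists_two_mul_mul_conj_eq hpq hs hT hw hβ
  · have hy0 := eq_zero_of_two_mul_mul_eq_sq hpq.p_two ψ (a := a) (b := c) (c := s a) (d := s c)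
      (w := algebraMap k L y) (by
        rw [← hy, hac, map_add, map_mul, map_pow, map_pow, map_natCast])
    rw [hy0, zero_pow two_ne_zero] at hy
    exact mul_ne_zero two_ne_zero (mul_ne_zero hβ0 ((map_ne_zero s).mpr hβ0)) hy
  · obtain ⟨x, hx, hxβ⟩ := h.exists_mul_conj_eq hpq hτ hI hR hβ
    have hp0 : (p : ℚ) ^ j ≠ 0 := pow_ne_zero _ (mod_cast (Fact.out : p.Prime).ne_zero)
    refine h.false_of_mul_conj_eq hpq hsA hsB hτ' hcomp hβ0 (hsk y) hy hxβ hp0 ?_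
    rw [h.left.mul_conj_eq_norm hsA, hx, ← pow_mul, mul_comm j]

end IsBiquadratic

theorem exists_odd_card_eq_two_pow_mul {G : Type*} [Group G] [Finite G] {m : ℕ}
    (hm : ∀ Q : Sylow 2 G, Nat.card Q = 2 ^ m) : ∃ n, Odd n ∧ Nat.card G = 2 ^ m * n := by
  obtain ⟨Q⟩ : Nonempty (Sylow 2 G) := inferInstance
  refine ⟨(Q : Subgroup G).index, ?_, by rw [← hm Q, Subgroup.card_mul_index]⟩
  rw [← Nat.not_even_iff_odd, even_iff_two_dvd]
  exact Q.not_dvd_index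

section IntNorm

variable {F M : Type*} [Field F] [Field M] [NumberField F] [NumberField M] [Algebra F M]

theorem IsQuadratic.exists_intNorm_eq {d : F} {θ : M} (h : IsQuadratic F M d θ) (x : 𝓞 M) :
    ∃ a b : F, (Algebra.intNorm (𝓞 F) (𝓞 M) x : F) = a ^ 2 - d * b ^ 2 := by
  obtain ⟨a, b, hab⟩ := h.exists_coord (x : M)
  refine ⟨a, b, ?_⟩
  rw [← h.norm_add_mul, hab]
  exact Algebra.algebraMap_intNorm (A := 𝓞 F) (B := 𝓞 M) (K := F) (L := M) x

theorem pow_two_eq_span_intNorm (hFM : Module.finrank F M = 2) {J : Ideal (𝓞 F)} {x : 𝓞 M}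
    (hx : J.map (algebraMap (𝓞 F) (𝓞 M)) = Ideal.span {x}) :
    J ^ 2 = Ideal.span {Algebra.intNorm (𝓞 F) (𝓞 M) x} := by
  rw [← Ideal.relNorm_singleton, ← hx, Ideal.relNorm_algebraMap, ← hFM,
    IsFractionRing.finrank_eq (𝓞 F) F (𝓞 M) M]

end IntNorm

namespace IsBiquadratic

variable {R k E L K : Type*} [Field R] [Field k] [Field E]
  [Field L] [Field K] [NumberField R] [NumberField k] [NumberField E] [NumberField L]
  [NumberField K] [Algebra R L] [Algebra k L] [Algebra E L] [Algebra L K] {A : R} {D : k} {B : E}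
  {C : K} {I : Ideal (𝓞 L)} {P : (Ideal (𝓞 K))⁰} {n : ℕ} {δ w : 𝓞 k}

theorem mk0_pow_four_mul_eq_one {r : ℕ} (hr : Odd r) (h : IsBiquadratic (-2) r A D B (L := L))
    (hI : I ≠ ⊥) (hP : (P : Ideal (𝓞 K)) ^ 2 = I.map (algebraMap (𝓞 L) (𝓞 K)))
    (hR : Nat.card (ClassGroup (𝓞 R)) ∣ n) (hE : Nat.card (ClassGroup (𝓞 E)) ∣ n)
    (hδ : (δ : k) = D) (hw : Ideal.relNorm (𝓞 k) I ^ n * Ideal.span {2, δ} = Ideal.span {w}) :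
    ClassGroup.mk0 P ^ (2 * (2 * n)) = 1 := by
  obtain ⟨t, ht, hspan⟩ := h.exists_map_span_two_pair_eq_span hr hδ
  obtain ⟨x, hx⟩ := h.exists_pow_two_mul_eq_span hI hR hE ht hspan hw
  rw [← map_pow, ClassGroup.mk0_eq_one_iff]
  refine ⟨⟨algebraMap (𝓞 L) (𝓞 K) x, ?_⟩⟩
  rw [SubmonoidClass.coe_pow, pow_mul, hP, ← Ideal.map_pow, hx, Ideal.map_span,
    Set.image_singleton, Ideal.submodule_span_eq]

variable {p q : ℕ} [Fact p.Prime] [Fact q.Prime]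

theorem mk0_pow_two_mul_ne_one (hpq : Residues p q) (h : IsBiquadratic (-2) q A D B (L := L))
    (hC : IsQuadratic L K (-p : ℤ) C) (hI : Ideal.absNorm I = p)
    (hP : (P : Ideal (𝓞 K)) ^ 2 = I.map (algebraMap (𝓞 L) (𝓞 K)))
    (hR : Nat.card (ClassGroup (𝓞 R)) ∣ n) (hδ : δ ^ 2 = -2 * q)
    (hw : Ideal.relNorm (𝓞 k) I ^ n * Ideal.span {2, δ} = Ideal.span {w}) :
    ClassGroup.mk0 P ^ (2 * n) ≠ 1 := by
  rw [← map_pow, Ne, ClassGroup.mk0_eq_one_iff]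
  rintro ⟨x, hx⟩
  rw [SubmonoidClass.coe_pow, pow_mul, hP, ← Ideal.map_pow, Ideal.submodule_span_eq] at hx
  have hIk : Ideal.absNorm (Ideal.relNorm (𝓞 k) I) = p := by rw [Ideal.absNorm_relNorm, hI]
  obtain ⟨j, rfl⟩ :=
    (even_of_pow_mul_span_two_pair_eq_span hpq h.middle hδ hIk hw).exists_two_nsmul
  obtain ⟨a, c, hac⟩ := hC.exists_intNorm_eq x
  refine h.pow_four_mul_ne_span hpq hI hR (span_two_pair_sq hpq.odd_q hδ) hw (a := a) (c := c)
    (β := Algebra.intNorm (𝓞 L) (𝓞 K) x) (by rw [hac]; push_cast; ring) ?_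
  rw [mul_comm, pow_mul]
  exact pow_two_eq_span_intNorm hC.finrank hx

theorem nonempty_sylow_mulEquiv_of_sqrt_neg (hpq : Residues p q)
    (h : IsBiquadratic (-2) q A D B (L := L)) (hC : IsQuadratic L K (-p : ℤ) C)
    (hcard : Nat.card (nthTorsion 2 (ClassGroup (𝓞 K))) ≤ 2) {m : ℕ}
    (hm : ∀ Q : Sylow 2 (ClassGroup (𝓞 k)), Nat.card Q = 2 ^ m) (Q : Sylow 2 (ClassGroup (𝓞 K))) :
    Nonempty (Q ≃* Multiplicative (ZMod (2 ^ (m + 1)))) := by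
  let _ : Algebra k K := ((algebraMap L K).comp (algebraMap k L)).toAlgebra
  obtain ⟨ψ⟩ := h.nonempty_ringHom_padic hpq
  obtain ⟨I, P, hI, hPN, hP⟩ := exists_sq_eq_map_of_ringHom_padic hC ψ
  have hP0 : P ∈ (Ideal (𝓞 K))⁰ := mem_nonZeroDivisors_of_ne_zero (ne_bot_of_absNorm_eq hPN)
  have hIk : Ideal.absNorm (Ideal.relNorm (𝓞 k) I) = p := by rw [Ideal.absNorm_relNorm, hI]
  obtain ⟨δ, hδ, hδsq⟩ := h.middle.exists_intCast_sqrt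
  push_cast at hδsq
  obtain ⟨hk, hk_odd, hk_eq⟩ := exists_odd_card_eq_two_pow_mul hm
  obtain ⟨M, rfl⟩ : ∃ M, m = M + 1 := Nat.exists_eq_succ_of_ne_zero fun hm0 => by
    have := two_dvd_card_classGroup hpq h.middle hδsq
    rw [hk_eq, hm0, pow_zero, one_mul] at this
    exact hk_odd.not_two_dvd_nat this
  set hR := Nat.card (ClassGroup (𝓞 R))
  set hE := Nat.card (ClassGroup (𝓞 E))
  have hodd : Odd (hk * (hR * hE)) := hk_odd.mul
    ((odd_card_classGroup_sqrt_neg_two h.left).mul (odd_card_classGroup_sqrt hpq h.right))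
  obtain ⟨w, hw⟩ := exists_pow_mul_span_two_pair_eq_span hpq h.middle hδsq hIk hodd
    ⟨hk, hk_eq⟩ ⟨hR * hE, by rw [hk_eq, mul_assoc]⟩
  have hRn : hR ∣ 2 ^ M * (hk * (hR * hE)) := ⟨2 ^ M * hk * hE, by ring⟩
  have hEn : hE ∣ 2 ^ M * (hk * (hR * hE)) := ⟨2 ^ M * hk * hR, by ring⟩
  have hexp : 2 ^ (M + 1) * (hk * (hR * hE)) = 2 * (2 ^ M * (hk * (hR * hE))) := by ring
  have hexp' : 2 ^ (M + 1 + 1) * (hk * (hR * hE)) = 2 * (2 * (2 ^ M * (hk * (hR * hE)))) := by ring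
  refine nonempty_sylow_mulEquiv hcard (hpq.mk0_notMem_nthPowers h.middle (P := ⟨P, hP0⟩) hPN)
    hodd.not_two_dvd_nat ?_ ?_ Q
  · rw [hexp']
    exact h.mk0_pow_four_mul_eq_one hpq.odd_q (ne_bot_of_absNorm_eq hI) hP hRn hEn hδ hw
  · rw [hexp]
    exact h.mk0_pow_two_mul_ne_one hpq hC hI hP hRn hδsq hw

end IsBiquadratic

section Adjoin

theorem finrank_adjoin_sqrt {F M : Type*} [Field F] [Field M] [Algebra F M] {d : F} {θ : M}
    (hθ : θ ^ 2 = algebraMap F M d) (hd : ¬ IsSquare d) : Module.finrank F F⟮θ⟯ = 2 := by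
  have hirr : Irreducible (Polynomial.X ^ 2 - Polynomial.C d) :=
    X_pow_sub_C_irreducible_of_prime Nat.prime_two fun b hb => hd ⟨b, by rw [← hb, pow_two]⟩
  have hmonic := Polynomial.monic_X_pow_sub_C d two_ne_zero
  have hroot : Polynomial.aeval θ (Polynomial.X ^ 2 - Polynomial.C d) = 0 := by simp [hθ]
  rw [adjoin.finrank ⟨_, hmonic, hroot⟩, ← minpoly.eq_of_irreducible_of_monic hirr hroot hmonic,
    Polynomial.natDegree_X_pow_sub_C]

variable {F₀ F Ω : Type*} [Field F₀] [Field F] [Field Ω] [Algebra F₀ F] [Algebra F₀ Ω] [Algebra F Ω]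
  [IsScalarTower F₀ F Ω] {S : Set Ω} [Algebra F (adjoin F₀ S)] [IsScalarTower F (adjoin F₀ S) Ω]
  {d : F} {θ : adjoin F₀ S} {t : Ω}

theorem fieldRange_eq_adjoin_simple (hθ : (θ : Ω) = t) (hS : S ⊆ F⟮t⟯) :
    (IsScalarTower.toAlgHom F (adjoin F₀ S) Ω).fieldRange = F⟮t⟯ := by
  apply le_antisymm
  · rintro _ ⟨x, rfl⟩
    have hle : adjoin F₀ S ≤ F⟮t⟯.restrictScalars F₀ := adjoin_le_iff.mpr hS
    exact hle x.2
  · exact adjoin_simple_le_iff.mpr ⟨θ, hθ⟩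

theorem isQuadratic_adjoin (hθ : (θ : Ω) = t) (ht : t ^ 2 = algebraMap F Ω d) (hd : ¬ IsSquare d)
    (hS : S ⊆ F⟮t⟯) : IsQuadratic F (adjoin F₀ S) d θ where
  finrank := by
    rw [← finrank_adjoin_sqrt ht hd, ← fieldRange_eq_adjoin_simple hθ hS]
    exact (AlgEquiv.ofInjectiveField
      (IsScalarTower.toAlgHom F (adjoin F₀ S) Ω)).toLinearEquiv.finrank_eq
  sq := Subtype.ext <| by
    rw [SubmonoidClass.coe_pow, hθ, ht]
    exact IsScalarTower.algebraMap_apply F (adjoin F₀ S) Ω d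
  not_isSquare := hd

theorem coe_algebraMap_gen [Algebra F₀⟮t⟯ (adjoin F₀ S)] [IsScalarTower F₀⟮t⟯ (adjoin F₀ S) Ω] :
    (algebraMap F₀⟮t⟯ (adjoin F₀ S) (AdjoinSimple.gen F₀ t) : Ω) = t :=
  (IsScalarTower.algebraMap_apply F₀⟮t⟯ (adjoin F₀ S) Ω _).symm

end Adjoin

theorem IsQuadratic.not_isSquare_intCast {F M : Type*} [Field F] [Field M] [CharZero F]
    [Algebra F M] {d e : ℤ} {θ : M} (h : IsQuadratic F M d θ) (he : ¬ IsSquare (e : F))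
    (hed : ¬ IsSquare ((e * d : ℤ) : F)) : ¬ IsSquare (e : M) := by
  intro hM
  rcases h.isSquare_or_isSquare_mul (e := e) (by rwa [map_intCast]) with h' | h'
  · exact he h'
  · exact hed (mod_cast h')

theorem not_isSquare_prime_mul {ℓ n : ℕ} [hℓ : Fact ℓ.Prime] (hn : ¬ ℓ ∣ n) :
    ¬ IsSquare (ℓ * n : ℚ) := by
  rw [← Nat.cast_mul, Rat.isSquare_natCast_iff]
  rintro ⟨x, hx⟩
  obtain ⟨y, rfl⟩ : ℓ ∣ x := or_self_iff.mp (hℓ.out.dvd_mul.mp (hx ▸ dvd_mul_right ℓ n))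
  rw [mul_assoc] at hx
  exact hn ⟨y * y, by rw [Nat.eq_of_mul_eq_mul_left hℓ.out.pos hx]; ring⟩

section Rational

variable {p q : ℕ} [hp : Fact p.Prime] [hq : Fact q.Prime] {R : Type*} [Field R] [NumberField R]
  {A : R}

theorem not_isSquare_neg_natCast (hA : IsQuadratic ℚ R (-2 : ℤ) A) (hp2 : p ≠ 2) :
    ¬ IsSquare ((-p : ℤ) : R) := by
  refine hA.not_isSquare_intCast (not_isSquare_of_neg (by simpa using hp.out.pos)) ?_
  rw [neg_mul_neg]
  exact mod_cast not_isSquare_prime_mul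
    (fun h2 => hp2 ((Nat.prime_dvd_prime_iff_eq hp.out Nat.prime_two).mp h2))

theorem not_isSquare_prime : ¬ IsSquare ((q : ℤ) : ℚ) := by
  rw [Int.cast_natCast, Rat.isSquare_natCast_iff]
  exact hq.out.prime.not_isSquare

theorem not_isSquare_natCast (hA : IsQuadratic ℚ R (-2 : ℤ) A) : ¬ IsSquare ((q : ℤ) : R) := by
  have hq0 := hq.out.pos
  exact hA.not_isSquare_intCast not_isSquare_prime
    (not_isSquare_of_neg (by push_cast; simpa using hq0))

theorem not_isSquare_natCast_mul_neg (hA : IsQuadratic ℚ R (-2 : ℤ) A) (hp2 : p ≠ 2)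
    (hpq : p ≠ q) : ¬ IsSquare ((q * -p : ℤ) : R) := by
  have hpos : 0 < (q * p : ℤ) := mod_cast Nat.mul_pos hq.out.pos hp.out.pos
  refine hA.not_isSquare_intCast (not_isSquare_of_neg (mod_cast (by linarith))) ?_
  have heq : (q * -p * -2 : ℤ) = (p * (2 * q) : ℕ) := by push_cast; ring
  rw [heq]
  refine mod_cast not_isSquare_prime_mul (n := 2 * q) fun hdvd => ?_
  rcases hp.out.dvd_mul.mp hdvd with h | h
  · exact hp2 ((Nat.prime_dvd_prime_iff_eq hp.out Nat.prime_two).mp h)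
  · exact hpq ((Nat.prime_dvd_prime_iff_eq hp.out hq.out).mp h)

end Rational

section Complex

theorem numberField_of_le {F T : IntermediateField ℚ ℂ} [NumberField T] (h : F ≤ T) :
    NumberField F where
  to_finiteDimensional :=
    Module.Finite.of_injective (inclusion h).toLinearMap (inclusion_injective h)

theorem isQuadratic_adjoin_gen {θ : ℂ} {d : ℤ} (hθ : θ ^ 2 = d) (hd : ¬ IsSquare (d : ℚ)) :
    IsQuadratic ℚ ℚ⟮θ⟯ d (AdjoinSimple.gen ℚ θ) :=
  isQuadratic_adjoin (AdjoinSimple.coe_gen ℚ θ) (by simpa using hθ) hd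
    (Set.singleton_subset_iff.mpr (mem_adjoin_simple_self ℚ θ))

theorem mem_adjoin_adjoin_simple (a b : ℂ) : a ∈ ℚ⟮a⟯⟮b⟯ :=
  IntermediateField.algebraMap_mem _ (AdjoinSimple.gen ℚ a)

variable {A B : ℂ}

theorem isBiquadratic_adjoin {d e : ℤ} (hA : A ^ 2 = d) (hB : B ^ 2 = e)
    (hd : ¬ IsSquare (d : ℚ)) (he : ¬ IsSquare (e : ℚ)) (hde : ¬ IsSquare ((d * e : ℤ) : ℚ))
    [NumberField ℚ⟮A⟯] [NumberField ℚ⟮A * B⟯] [NumberField ℚ⟮B⟯] [NumberField (adjoin ℚ {A, B})]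
    [Algebra ℚ⟮A⟯ (adjoin ℚ {A, B})] [Algebra ℚ⟮A * B⟯ (adjoin ℚ {A, B})]
    [Algebra ℚ⟮B⟯ (adjoin ℚ {A, B})] [IsScalarTower ℚ⟮A⟯ (adjoin ℚ {A, B}) ℂ]
    [IsScalarTower ℚ⟮A * B⟯ (adjoin ℚ {A, B}) ℂ] [IsScalarTower ℚ⟮B⟯ (adjoin ℚ {A, B}) ℂ] :
    IsBiquadratic d e (L := adjoin ℚ {A, B}) (AdjoinSimple.gen ℚ A)
      (AdjoinSimple.gen ℚ (A * B)) (AdjoinSimple.gen ℚ B) := by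
  have hA0 : A ≠ 0 := by
    rintro rfl
    exact hd ⟨0, by simpa using hA.symm⟩
  have hleft := isQuadratic_adjoin_gen hA hd
  have hmiddle := isQuadratic_adjoin_gen (θ := A * B) (d := d * e)
    (by rw [mul_pow, hA, hB, Int.cast_mul]) hde
  have hright := isQuadratic_adjoin_gen hB he
  refine ⟨hleft, hmiddle, hright,
    isQuadratic_adjoin coe_algebraMap_gen (by simpa using hB)
      (hleft.not_isSquare_intCast he (by rwa [mul_comm])) (Set.pair_subset ?_ ?_),
    isQuadratic_adjoin coe_algebraMap_gen (by simpa using hA)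
      (hmiddle.not_isSquare_intCast hd ?_) (Set.pair_subset ?_ ?_),
    isQuadratic_adjoin coe_algebraMap_gen (by simpa using hA)
      (hright.not_isSquare_intCast hd hde) (Set.pair_subset ?_ ?_), Subtype.ext ?_⟩
  · exact mem_adjoin_adjoin_simple A B
  · exact mem_adjoin_simple_self _ B
  · rintro ⟨x, hx⟩
    refine he ⟨x / d, ?_⟩
    have hd0 : (d : ℚ) ≠ 0 := fun h0 => hd (h0 ▸ IsSquare.zero)
    push_cast at hx
    field_simp
    linear_combination hx
  · exact mem_adjoin_simple_self _ A
  · have hB_eq : A⁻¹ * (A * B) = B := inv_mul_cancel_left₀ hA0 B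
    exact hB_eq.subst (motive := (· ∈ ℚ⟮A * B⟯⟮A⟯))
      (mul_mem (inv_mem (mem_adjoin_simple_self _ A)) (mem_adjoin_adjoin_simple _ A))
  · exact mem_adjoin_simple_self _ A
  · exact mem_adjoin_adjoin_simple B A
  · rw [MulMemClass.coe_mul, coe_algebraMap_gen, coe_algebraMap_gen, coe_algebraMap_gen]

variable {p q : ℕ} [hp : Fact p.Prime] [hq : Fact q.Prime] {S : ℂ}

theorem mul_div_two_sq {a b c : ℂ} (ha : a ^ 2 = -2) (hb : b ^ 2 = 2 * c) :
    (a * b / 2) ^ 2 = -c := by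
  rw [div_pow, mul_pow, ha, hb]
  ring

theorem mem_adjoin_mul_div_two {F : Type*} [Field F] [Algebra F ℂ] {a b : ℂ} (ha : a ^ 2 = -2)
    (haF : a ∈ F⟮a * b / 2⟯) : b ∈ F⟮a * b / 2⟯ := by
  have hb : -(a * (a * b / 2)) = b := by linear_combination -(b / 2) * ha
  exact hb.subst (motive := (· ∈ F⟮a * b / 2⟯))
    (neg_mem (mul_mem haF (mem_adjoin_simple_self F _)))

theorem card_nthTorsion_classGroup_adjoin (hpq : Residues p q) (hA : A ^ 2 = -2) (hB : B ^ 2 = q)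
    (hS : S ^ 2 = 2 * p) [NumberField (adjoin ℚ {B, S, A})] :
    Nat.card (nthTorsion 2 (ClassGroup (𝓞 (adjoin ℚ {B, S, A})))) ≤ 2 := by
  let F := adjoin ℚ {S, A}
  have hFK : F ≤ adjoin ℚ {B, S, A} := adjoin.mono ℚ _ _ (Set.subset_insert _ _)
  have hRF : ℚ⟮A⟯ ≤ F := adjoin.mono ℚ _ _ (Set.subset_insert _ _)
  have : NumberField F := numberField_of_le hFK
  have : NumberField ℚ⟮A⟯ := numberField_of_le hRF
  let _ : Algebra ℚ⟮A⟯ F := (inclusion hRF).toAlgebra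
  let _ : Algebra F (adjoin ℚ {B, S, A}) := (inclusion hFK).toAlgebra
  have : IsScalarTower ℚ⟮A⟯ F ℂ := .of_algebraMap_eq fun _ => rfl
  have : IsScalarTower F (adjoin ℚ {B, S, A}) ℂ := .of_algebraMap_eq fun _ => rfl
  have hAF : A ∈ F := subset_adjoin ℚ _ (by simp)
  have hSF : S ∈ F := subset_adjoin ℚ _ (by simp)
  have hBK : B ∈ adjoin ℚ {B, S, A} := subset_adjoin ℚ _ (by simp)
  have hR : IsQuadratic ℚ ℚ⟮A⟯ (-2 : ℤ) (AdjoinSimple.gen ℚ A) :=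
    isQuadratic_adjoin_gen (by simpa using hA) (not_isSquare_of_neg (by norm_num))
  have hF : IsQuadratic ℚ⟮A⟯ F (-p : ℤ)
      ⟨A * S / 2, div_mem (mul_mem hAF hSF) (ofNat_mem F 2)⟩ :=
    isQuadratic_adjoin rfl (by simpa using mul_div_two_sq hA hS)
      (not_isSquare_neg_natCast hR hpq.p_ne_two)
      (Set.pair_subset (mem_adjoin_mul_div_two hA (mem_adjoin_adjoin_simple A _))
        (mem_adjoin_adjoin_simple A _))
  have hK : IsQuadratic F (adjoin ℚ {B, S, A}) (q : ℤ) ⟨B, hBK⟩ :=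
    isQuadratic_adjoin rfl (by simpa using hB)
      (hF.not_isSquare_intCast (not_isSquare_natCast hR)
        (not_isSquare_natCast_mul_neg hR hpq.p_ne_two hpq.ne))
      (Set.insert_subset (mem_adjoin_simple_self F B) (Set.pair_subset
        (IntermediateField.algebraMap_mem _ (⟨S, hSF⟩ : F))
        (IntermediateField.algebraMap_mem _ (⟨A, hAF⟩ : F))))
  exact card_nthTorsion_classGroup_triquadratic hpq hR hF hK

theorem isQuadratic_adjoin_of_isBiquadratic (hpq : Residues p q) (hA : A ^ 2 = -2)
    (hS : S ^ 2 = 2 * p) {R k E : Type*} [Field R] [Field k] [Field E] [NumberField R]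
    [NumberField k] [NumberField E] [NumberField (adjoin ℚ {A, B})] [Algebra R (adjoin ℚ {A, B})]
    [Algebra k (adjoin ℚ {A, B})] [Algebra E (adjoin ℚ {A, B})] {a : R} {d : k} {b : E}
    (h : IsBiquadratic (-2) q a d b (L := adjoin ℚ {A, B}))
    [Algebra (adjoin ℚ {A, B}) (adjoin ℚ {B, S, A})]
    [IsScalarTower (adjoin ℚ {A, B}) (adjoin ℚ {B, S, A}) ℂ] {C : adjoin ℚ {B, S, A}}
    (hC : (C : ℂ) = A * S / 2) :
    IsQuadratic (adjoin ℚ {A, B}) (adjoin ℚ {B, S, A}) (-p : ℤ) C := by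
  have hAL : A ∈ (adjoin ℚ {A, B})⟮A * S / 2⟯ := IntermediateField.algebraMap_mem _
    (⟨A, subset_adjoin ℚ _ (by simp)⟩ : adjoin ℚ {A, B})
  have hBL : B ∈ (adjoin ℚ {A, B})⟮A * S / 2⟯ := IntermediateField.algebraMap_mem _
    (⟨B, subset_adjoin ℚ _ (by simp)⟩ : adjoin ℚ {A, B})
  refine isQuadratic_adjoin hC (by simpa using mul_div_two_sq hA hS) ?_
    (Set.insert_subset hBL (Set.pair_subset (mem_adjoin_mul_div_two hA hAL) hAL))
  refine h.over_left.not_isSquare_intCast (not_isSquare_neg_natCast h.left hpq.p_ne_two) ?_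
  rw [mul_comm]
  exact not_isSquare_natCast_mul_neg h.left hpq.p_ne_two hpq.ne

theorem nonempty_sylow_mulEquiv_adjoin (hpq : Residues p q) (hA : A ^ 2 = -2) (hB : B ^ 2 = q)
    (hS : S ^ 2 = 2 * p) {m : ℕ}
    (hm : ∀ Q : Sylow 2 (ClassGroup (𝓞 ℚ⟮A * B⟯)), Nat.card Q = 2 ^ m)
    [NumberField (adjoin ℚ {B, S, A})] (Q : Sylow 2 (ClassGroup (𝓞 (adjoin ℚ {B, S, A})))) :
    Nonempty (Q ≃* Multiplicative (ZMod (2 ^ (m + 1)))) := by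
  let L := adjoin ℚ {A, B}
  let K := adjoin ℚ {B, S, A}
  have hAL : ℚ⟮A⟯ ≤ L := adjoin.mono ℚ _ _ (by simp)
  have hBL : ℚ⟮B⟯ ≤ L := adjoin.mono ℚ _ _ (by simp)
  have hABL : ℚ⟮A * B⟯ ≤ L := adjoin_simple_le_iff.mpr (mul_mem
    (hAL (mem_adjoin_simple_self ℚ A)) (hBL (mem_adjoin_simple_self ℚ B)))
  have hLK : L ≤ K := adjoin.mono ℚ _ _ (Set.pair_subset (by simp) (by simp))
  have : NumberField L := numberField_of_le hLK
  have : NumberField ℚ⟮A⟯ := numberField_of_le hAL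
  have : NumberField ℚ⟮B⟯ := numberField_of_le hBL
  have : NumberField ℚ⟮A * B⟯ := numberField_of_le hABL
  let _ : Algebra ℚ⟮A⟯ L := (inclusion hAL).toAlgebra
  let _ : Algebra ℚ⟮B⟯ L := (inclusion hBL).toAlgebra
  let _ : Algebra ℚ⟮A * B⟯ L := (inclusion hABL).toAlgebra
  let _ : Algebra L K := (inclusion hLK).toAlgebra
  have : IsScalarTower ℚ⟮A⟯ L ℂ := .of_algebraMap_eq fun _ => rfl
  have : IsScalarTower ℚ⟮B⟯ L ℂ := .of_algebraMap_eq fun _ => rfl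
  have : IsScalarTower ℚ⟮A * B⟯ L ℂ := .of_algebraMap_eq fun _ => rfl
  have : IsScalarTower L K ℂ := .of_algebraMap_eq fun _ => rfl
  have hL : IsBiquadratic (-2) q (L := L) (AdjoinSimple.gen ℚ A) (AdjoinSimple.gen ℚ (A * B))
      (AdjoinSimple.gen ℚ B) :=
    isBiquadratic_adjoin (by simpa using hA) (by simpa using hB)
      (not_isSquare_of_neg (by norm_num)) not_isSquare_prime
      (not_isSquare_of_neg (by simpa using hq.out.pos))
  have hC : A * S / 2 ∈ K := div_mem
    (mul_mem (subset_adjoin ℚ _ (by simp)) (subset_adjoin ℚ _ (by simp))) (ofNat_mem K 2)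
  exact hL.nonempty_sylow_mulEquiv_of_sqrt_neg hpq
    (isQuadratic_adjoin_of_isBiquadratic hpq hA hS hL (C := ⟨A * S / 2, hC⟩) rfl)
    (card_nthTorsion_classGroup_adjoin hpq hA hB hS) hm Q

end Complex

end Triquad

theorem statement10 (p q : ℕ) (h : Cond2 p q) (m : ℕ)
    (hm : ∀ Q : Sylow 2 (ClassGroup (𝓞 ↥(k0 q))),
      Nat.card ↥(Q : Subgroup (ClassGroup (𝓞 ↥(k0 q)))) = 2 ^ m)
    [NumberField ↥(Kf p q)]
    (P : Sylow 2 (ClassGroup (𝓞 ↥(Kf p q)))) :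
    Nonempty (↥(P : Subgroup (ClassGroup (𝓞 ↥(Kf p q)))) ≃*
      Multiplicative (ZMod (2 ^ (m + 1)))) := by
  have : Fact p.Prime := ⟨h.1⟩
  have : Fact q.Prime := ⟨h.2.1⟩
  have hsq : ∀ x : ℝ, 0 ≤ x → ((Real.sqrt x : ℝ) : ℂ) ^ 2 = x := fun x hx => by
    rw [← Complex.ofReal_pow, Real.sq_sqrt hx]
  have hk : k0 q = adjoin ℚ {Complex.I * ((Real.sqrt 2 : ℝ) : ℂ) * ((Real.sqrt q : ℝ) : ℂ)} := by
    rw [k0, Real.sqrt_mul zero_le_two, Complex.ofReal_mul, mul_assoc]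
  rw [hk] at hm
  have : NumberField (adjoin ℚ {((Real.sqrt q : ℝ) : ℂ), ((Real.sqrt (2 * p) : ℝ) : ℂ),
    Complex.I * ((Real.sqrt 2 : ℝ) : ℂ)}) := ‹NumberField ↥(Kf p q)›
  exact Triquad.nonempty_sylow_mulEquiv_adjoin (Triquad.Residues.of_cond2 h)
    (by rw [mul_pow, hsq 2 zero_le_two]; simp) (by rw [hsq q q.cast_nonneg]; simp)
    (by rw [hsq (2 * p) (by positivity)]; simp) hm P
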